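/- arXiv:1909.10813 — 3 statements merged into one kernel-verified Lean document; each statement's English description precedes it below -/
import Mathlib

section
/- Let A ⊕ B ⊆ C be a primitive extension of ℤ-lattices. Then det(A) divides [C : A⊕B] · det(C) in ℤ. -/
/-!
Let `a` be a basis of `A`, `s` a basis of `S`. Since `A` is primitive, `a` extends to a basis
`c = (a, t)` of `C`. Let `P` be the matrix expressing the family `v = (a, s)` in the basis `c`.
The mixed Gram matrix `B (c i) (v j)` equals `Gram(c) * P`, and it is block lower triangular with
upper left block `Gram(a)`, because `A ⊥ S`. Hence `det A` divides `det Gram(c) * det P`.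
Replacing `c` by any other basis of `C` only multiplies by further integer determinants.

If `A + S` has finite index, nondegeneracy forces `A ∩ S = 0`, so `v` is a basis of `A + S` and
`|det P| = [C : A + S]` (`Submodule.natAbs_det_basis_change`). If the index is infinite, then
`Nat.card` is `0` and there is nothing to prove.
-/

open Module

/-- `d` is the determinant of the sublattice `S` of the lattice `(C, B)`, i.e. the determinant
of the Gram matrix of the restricted bilinear form with respect to some (equivalently, any)
`ℤ`-basis of `S`. -/
def SubGramDet {C : Type*} [AddCommGroup C] [Module ℤ C]
    (B : C →ₗ[ℤ] C →ₗ[ℤ] ℤ) (S : Submodule ℤ C) (d : ℤ) : Prop :=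
  ∃ (k : ℕ) (b : Basis (Fin k) ℤ ↥S),
    (Matrix.of fun i j : Fin k => B (b i).1 (b j).1).det = d

/-- `d` is the determinant of the lattice `(C, B)`. -/
def GramDet {C : Type*} [AddCommGroup C] [Module ℤ C]
    (B : C →ₗ[ℤ] C →ₗ[ℤ] ℤ) (d : ℤ) : Prop :=
  ∃ (k : ℕ) (b : Basis (Fin k) ℤ C),
    (Matrix.of fun i j : Fin k => B (b i) (b j)).det = d

/-- When `A + S` has finite index, nondegeneracy makes the orthogonal submodules `A` and `S`
independent: a common element is orthogonal to `A + S`, hence to a nonzero multiple of every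
element of `C`. -/
lemma inf_eq_bot_of_finite_index {C : Type*} [AddCommGroup C]
    (B : C →ₗ[ℤ] C →ₗ[ℤ] ℤ) (hsymm : ∀ x y, B x y = B y x)
    (hnondeg : ∀ x, (∀ y, B x y = 0) → x = 0) (A S : Submodule ℤ C)
    (horth : ∀ a ∈ A, ∀ s ∈ S, B a s = 0) (hfin : Nat.card (C ⧸ (A ⊔ S)) ≠ 0) :
    A ⊓ S = ⊥ := by
  rw [eq_bot_iff]
  rintro x ⟨hxA, hxS⟩
  refine (Submodule.mem_bot ℤ).2 (hnondeg x fun y => ?_)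
  have hy : (Nat.card (C ⧸ (A ⊔ S))) • y ∈ A ⊔ S := by
    rw [← Submodule.Quotient.mk_eq_zero, Submodule.Quotient.mk_smul]
    exact card_nsmul_eq_zero'
  obtain ⟨a, ha, s, hs, has⟩ := Submodule.mem_sup.1 hy
  have h : B x (Nat.card (C ⧸ (A ⊔ S)) • y) = 0 := by
    rw [← has, map_add, hsymm x a, horth a ha x hxS, horth x hxA s hs, add_zero]
  rw [map_nsmul] at h
  exact (smul_eq_zero.1 h).resolve_left hfin

/-- The mixed Gram matrix of a basis `c = (a, t)` of `C` against `v = (a, s)`, with `s` orthogonal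
to `a`, is block triangular, so the Gram determinant of `a` divides `det Gram(d) * det_c v` for
every basis `d` of `C`. -/
lemma gram_det_dvd {C ι κ : Type*} [AddCommGroup C] [Fintype ι] [Fintype κ] [DecidableEq ι]
    [DecidableEq κ] (B : C →ₗ[ℤ] C →ₗ[ℤ] ℤ) (c d : Basis (ι ⊕ κ) ℤ C) (s : κ → C)
    (horth : ∀ i j, B (c (Sum.inl i)) (s j) = 0) :
    (Matrix.of fun i j : ι => B (c (Sum.inl i)) (c (Sum.inl j))).det ∣
      c.det (Sum.elim (fun i => c (Sum.inl i)) s) *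
        (Matrix.of fun i j => B (d i) (d j)).det := by
  set v : ι ⊕ κ → C := Sum.elim (fun i => c (Sum.inl i)) s with hv
  have hG : (d.toMatrix c).transpose * (Matrix.of fun i j => B (d i) (d j)) * d.toMatrix v
      = Matrix.of fun i j => B (c i) (v j) := by
    ext i j
    conv_rhs => rw [Matrix.of_apply, ← d.sum_repr (c i), ← d.sum_repr (v j)]
    simp only [Matrix.mul_apply, Matrix.transpose_apply, Basis.toMatrix_apply, Matrix.of_apply,
      map_sum, map_smul, LinearMap.sum_apply, LinearMap.smul_apply, smul_eq_mul, Finset.sum_mul,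
      Finset.mul_sum]
    refine Finset.sum_congr rfl fun _ _ => Finset.sum_congr rfl fun _ _ => by ring
  have hM : (Matrix.of fun i j => B (c i) (v j)) = Matrix.fromBlocks
      (Matrix.of fun i j : ι => B (c (Sum.inl i)) (c (Sum.inl j))) 0
      (Matrix.of fun i j => B (c (Sum.inr i)) (c (Sum.inl j)))
      (Matrix.of fun i j => B (c (Sum.inr i)) (s j)) := by
    ext (i | i) (j | j) <;> simp [hv, horth]
  have hdet := congrArg Matrix.det hG
  rw [hM, Matrix.det_fromBlocks_zero₁₂, Matrix.det_mul, Matrix.det_mul, Matrix.det_transpose]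
    at hdet
  -- `d.toMatrix v = d.toMatrix c * c.toMatrix v`, and `d.toMatrix c` is unimodular.
  have hcd : (c.toMatrix d).det * (d.toMatrix c).det = 1 := by
    rw [← Matrix.det_mul, Basis.toMatrix_mul_toMatrix_flip, Matrix.det_one]
  have hP : (c.toMatrix d).det * (d.toMatrix v).det = c.det v := by
    rw [← Matrix.det_mul, Basis.toMatrix_mul_toMatrix, Basis.det_apply]
  refine ⟨(c.toMatrix d).det ^ 2 * (Matrix.of fun i j => B (c (Sum.inr i)) (s j)).det, ?_⟩
  rw [← hP]
  linear_combination (c.toMatrix d).det ^ 2 * hdet - (c.toMatrix d).det * (d.toMatrix v).det *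
    (Matrix.of fun i j => B (d i) (d j)).det * hcd

/-- For a primitive extension `A ⊕ S ⊆ C` of `ℤ`-lattices,
`det(A)` divides `[C : A ⊕ S] · det(C)` in `ℤ`. -/
theorem det_dvd_index_mul_det
    {C : Type*} [AddCommGroup C] [Module ℤ C] [Module.Free ℤ C] [Module.Finite ℤ C]
    (B : C →ₗ[ℤ] C →ₗ[ℤ] ℤ)
    (hsymm : ∀ x y, B x y = B y x)
    (hnondeg : ∀ x, (∀ y, B x y = 0) → x = 0)
    (A S : Submodule ℤ C)
    (hAprim : NoZeroSMulDivisors ℤ (C ⧸ A))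
    (hSprim : NoZeroSMulDivisors ℤ (C ⧸ S))
    (horth : ∀ a ∈ A, ∀ s ∈ S, B a s = 0)
    (hrank : finrank ℤ ↥A + finrank ℤ ↥S = finrank ℤ C)
    (dA dC : ℤ)
    (hdA : SubGramDet B A dA) (hdC : GramDet B dC) :
    dA ∣ (Nat.card (C ⧸ (A ⊔ S)) : ℤ) * dC := by
  obtain rfl : ‹Module ℤ C› = AddCommGroup.toIntModule C := Subsingleton.elim _ _
  obtain ⟨k, a, rfl⟩ := hdA
  obtain ⟨n, d, rfl⟩ := hdC
  by_cases hfin : Nat.card (C ⧸ (A ⊔ S)) = 0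
  · simp [hfin]
  have hinf := inf_eq_bot_of_finite_index B hsymm hnondeg A S horth hfin
  have : Module.IsTorsionFree ℤ (C ⧸ A) := by
    refine Module.IsTorsionFree.mk fun r hr x y hxy => ?_
    have h : r • (x - y) = 0 := by rw [smul_sub, sub_eq_zero]; exact hxy
    exact sub_eq_zero.1 ((hAprim.eq_zero_or_eq_zero_of_smul_eq_zero h).resolve_left hr.ne_zero)
  have : Module.Free ℤ (C ⧸ A) := Module.free_of_finite_type_torsion_free'
  let s := Module.finBasis ℤ S
  have hq : finrank ℤ (C ⧸ A) = finrank ℤ S := by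
    have := Submodule.finrank_quotient_add_finrank A
    omega
  let c := Basis.sumQuot a (Module.finBasisOfFinrankEq ℤ (C ⧸ A) hq)
  have hc : ∀ i, c (Sum.inl i) = a i := fun i => Basis.sumQuot_inl _ _ i
  let v : Fin k ⊕ Fin (finrank ℤ S) → C := Sum.elim (fun i => (a i : C)) fun j => (s j : C)
  have hspanA : Submodule.span ℤ (Set.range fun i => (a i : C)) = A := by
    have h := congrArg (Submodule.map A.subtype) a.span_eq
    rwa [Submodule.map_span, ← Set.range_comp, Submodule.map_top, Submodule.range_subtype] at h
  have hspanS : Submodule.span ℤ (Set.range fun i => (s i : C)) = S := by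
    have h := congrArg (Submodule.map S.subtype) s.span_eq
    rwa [Submodule.map_span, ← Set.range_comp, Submodule.map_top, Submodule.range_subtype] at h
  have hli : LinearIndependent ℤ v := by
    refine LinearIndependent.sum_type (a.linearIndependent.map' A.subtype A.ker_subtype)
      (s.linearIndependent.map' S.subtype S.ker_subtype) ?_
    have : Disjoint (Submodule.span ℤ (Set.range fun i => (a i : C)))
        (Submodule.span ℤ (Set.range fun i => (s i : C))) := by
      rw [hspanA, hspanS, disjoint_iff, hinf]
    exact this
  have hspan : Submodule.span ℤ (Set.range v) = A ⊔ S := by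
    rw [Set.Sum.elim_range, Submodule.span_union, hspanA, hspanS]
  let bN : Basis _ ℤ ↥(A ⊔ S) := (Basis.span hli).map (LinearEquiv.ofEq _ _ hspan)
  have hbN : (Subtype.val ∘ bN : _ → C) = v := by
    ext i
    simp [bN, Basis.span_apply]
  have hdet : (c.det v).natAbs = Nat.card (C ⧸ (A ⊔ S)) := by
    rw [← hbN]
    exact Submodule.natAbs_det_basis_change c (A ⊔ S) bN
  let e := d.indexEquiv c
  have key := gram_det_dvd B c (d.reindex e) (fun j => (s j : C))
    (fun i j => by rw [hc]; exact horth _ (a i).2 _ (s j).2)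
  have hd : (Matrix.of fun i j => B (d.reindex e i) (d.reindex e j)).det
      = (Matrix.of fun i j => B (d i) (d j)).det := by
    rw [← Matrix.det_reindex_self e (Matrix.of fun i j => B (d i) (d j))]
    congr 1
    ext i j
    simp
  simp only [hc] at key
  rw [hd] at key
  rw [← hdet]
  rcases Int.natAbs_eq (c.det v) with h | h
  · rw [← h]; exact key
  · rw [← neg_eq_iff_eq_neg.2 h, neg_mul, dvd_neg]; exact key
end

section
/- Let N be the ℤ-lattice U ⊕ U(2) ⊕ E₈(−2), and let g be an isometry of N such that Φ₁₅ divides the characteristic polynomial of g and such that N is the internal orthogonal direct sum of N₁₅ := ker Φ₁₅(g) and its orthogonal complement N₁₅^⊥ in N (i.e. N = N₁₅ + N₁₅^⊥). Then N₁₅ is isometric to E₈(−2) and N₁₅^⊥ is isometric to U ⊕ U(2). -/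
/-!
Write `S = ker Φ₁₅(g)` and `D = S^⊥`, so that `N = S ⊕ D`.

*The rank of `S`.* Let `R = {x ∈ N | ⟨x, N⟩ ⊆ 2ℤ}`. The isometry `g` acts on `N / R ≅ 𝔽₂²`
through `SL₂(𝔽₂)`, a group without elements of order `5`, so `Φ₁₅(g)` is invertible there and `S ⊆ R`
(`even_of_ker`). As `2N* ⊆ N`, the summand `S` is therefore twice a unimodular lattice
(`half_unimodular`), and `det S · det D = ± 2¹⁰` gives `2^m · |det D| = 2¹⁰` with `m = rank S`.
Since `S` is a nonzero `ℤ[ζ₁₅]`-module, `m ≥ 8`, and `4 ∣ m` because the norm of `1 - ζ₅` is `5`.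
Hence `m = 8`, `rank D = 4` and `|det D| = 4`.

*The complement `D`.* The vectors of `D` with even first coordinate form a sublattice `K` of index
two with `⟨x, y⟩ ∈ 2ℤ` and `⟨x, x⟩ ∈ 4ℤ`, so `K(½)` is an even unimodular lattice of rank four.
Hermite's bound (`hermite`) produces isotropic vectors, so `K(½) ≅ U ⊕ U`; recovering `D` as an
overlattice of `K` gives `D ≅ U ⊕ U(2)` (`exists_UU2_frame`, `isometricTo_UU2`).

*The kernel `S`.* As `N` has signature `(2, 10)` and `D` contains a positive definite plane, `S` is
negative definite (`eq_zero_of_nonneg`). The form of `S` takes values in `4ℤ` on the diagonal, and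
Hermite's bound in rank eight yields `v ∈ S` with `⟨v, v⟩ = -4`. The Gram matrix of `-½⟨ , ⟩` on
`v, gv, …, g⁷v` is a Toeplitz matrix determined by three integers through the relation `Φ₁₅(g)v = 0`;
positivity leaves eight matrices, in each of which simple roots of `E₈` can be written down
(`exists_E8_frame`). Being unimodular, this `E₈` fills `S(-½)` (`exists_basis_of_gram`).
-/

open Module Polynomial Matrix

/-- Index type for the rank-12 lattice `N = U ⊕ U(2) ⊕ E₈(-2)`. -/
abbrev I12 : Type := (Fin 2 ⊕ Fin 2) ⊕ Fin 8

/-- Gram matrix of the hyperbolic plane `U`. -/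
def UGram : Matrix (Fin 2) (Fin 2) ℤ := !![0, 1; 1, 0]

/-- Gram matrix of the lattice `N = U ⊕ U(2) ⊕ E₈(-2)`. -/
def NGram : Matrix I12 I12 ℤ :=
  Matrix.fromBlocks (Matrix.fromBlocks UGram 0 0 ((2 : ℤ) • UGram)) 0 0
    ((-2 : ℤ) • CartanMatrix.E₈)

/-- The bilinear form of the lattice `N = U ⊕ U(2) ⊕ E₈(-2)` on `I12 → ℤ`. -/
noncomputable def NBilin : LinearMap.BilinForm ℤ (I12 → ℤ) := Matrix.toBilin' NGram

/-- The sublattice `S` of `N`, with the restricted form, is isometric to the `ℤ`-lattice with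
Gram matrix `G`: there is a basis of `S` whose Gram matrix is `G`. -/
def IsometricTo {ι : Type} [Fintype ι] (S : Submodule ℤ (I12 → ℤ)) (G : Matrix ι ι ℤ) : Prop :=
  ∃ b : Basis ι ℤ ↥S, ∀ i j, NBilin (b i).1 (b j).1 = G i j

/-- `d` is the determinant of the sublattice `S` of `N`: the determinant of the Gram matrix of
the restricted form with respect to some (equivalently, any) `ℤ`-basis of `S`. -/
def SubDet (S : Submodule ℤ (I12 → ℤ)) (d : ℤ) : Prop :=
  ∃ (k : ℕ) (b : Basis (Fin k) ℤ ↥S),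
    (Matrix.of fun i j : Fin k => NBilin (b i).1 (b j).1).det = d

/-- The sublattice `S` of `N` is negative definite. -/
def NegDef (S : Submodule ℤ (I12 → ℤ)) : Prop :=
  ∀ x ∈ S, x ≠ 0 → NBilin x x < 0

/-- Gram matrix of the root lattice `A₂`. -/
def A2Gram : Matrix (Fin 2) (Fin 2) ℤ := !![2, -1; -1, 2]

/-- The Cartan matrix (= Gram matrix) of the root lattice `Aₙ`. -/
def ACartan (n : ℕ) : Matrix (Fin n) (Fin n) ℤ :=
  Matrix.of fun i j =>
    if i = j then 2 else if i.val + 1 = j.val ∨ j.val + 1 = i.val then -1 else 0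

/-- Gram matrix of the lattice `U ⊕ U(2)`. -/
def UU2Gram : Matrix (Fin 2 ⊕ Fin 2) (Fin 2 ⊕ Fin 2) ℤ :=
  Matrix.fromBlocks UGram 0 0 ((2 : ℤ) • UGram)

/-! ### Hermite reduction of integral symmetric forms -/

theorem congr_apply {m n : Type*} [Fintype m] (H : Matrix m m ℤ) (X : Matrix m n ℤ) (a b : n) :
    (Xᵀ * H * X) a b = ∑ i, ∑ j, X i a * H i j * X j b := by
  simp only [Matrix.mul_apply, Matrix.transpose_apply, Finset.sum_mul]
  exact Finset.sum_comm

theorem congr_symm {m n : Type*} [Fintype m] {H : Matrix m m ℤ} (hH : Hᵀ = H)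
    (X : Matrix m n ℤ) : (Xᵀ * H * X)ᵀ = Xᵀ * H * X := by
  simp [Matrix.transpose_mul, hH, Matrix.mul_assoc]

theorem abs_det_congr {m : Type*} [Fintype m] [DecidableEq m] (H X : Matrix m m ℤ)
    (hX : IsUnit X.det) : |(Xᵀ * H * X).det| = |H.det| := by
  have : |X.det| = 1 := Int.isUnit_iff_abs_eq.1 hX
  simp [Matrix.det_mul, abs_mul, this]

/-- With `a = H 0 0`, the form `a ⟨y, y⟩ - ⟨e₀, y⟩²` on the span of the other `n + 1` basis vectors
has as Gram matrix `a` times the Schur complement of `a`, hence determinant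
`aⁿ⁺¹ (det H / a) = aⁿ det H`. -/
theorem det_schur (n : ℕ) (H : Matrix (Fin (n + 2)) (Fin (n + 2)) ℤ) (h0 : H 0 0 ≠ 0) :
    (Matrix.of fun i j : Fin (n + 1) =>
      H 0 0 * H i.succ j.succ - H i.succ 0 * H 0 j.succ).det = H 0 0 ^ n * H.det := by
  set E : Matrix (Fin (n + 1)) (Fin (n + 1)) ℤ := Matrix.of fun i j =>
      H 0 0 * H i.succ j.succ - H i.succ 0 * H 0 j.succ with hE
  let L : Matrix (Fin (n + 2)) (Fin (n + 2)) ℤ := Matrix.of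
    (Fin.cons (Fin.cons 1 0) fun i => Fin.cons (-H i.succ 0) (Pi.single i (H 0 0)))
  have hL : L.det = H 0 0 ^ (n + 1) := by
    rw [Matrix.det_succ_row_zero, Fin.sum_univ_succ]
    have : (L.submatrix Fin.succ Fin.succ) = Matrix.diagonal fun _ => H 0 0 := by
      ext i j
      simp [L, Matrix.diagonal_apply, Pi.single_apply, eq_comm]
    simp [L, Fin.succAbove_zero] at this ⊢
    rw [this]; simp
  have hLH : (L * H).det = H 0 0 * E.det := by
    rw [Matrix.det_succ_column_zero, Fin.sum_univ_succ]
    have h1 : ∀ j, (L * H) 0 j = H 0 j := by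
      intro j; simp [L, Matrix.mul_apply, Fin.sum_univ_succ]
    have h2 : ∀ (i : Fin (n + 1)) j, (L * H) i.succ j = H 0 0 * H i.succ j - H i.succ 0 * H 0 j := by
      intro i j
      rw [Matrix.mul_apply, Fin.sum_univ_succ]
      simp [L, Pi.single_apply]
      ring
    have h3 : (L * H).submatrix Fin.succ Fin.succ = E := by
      ext i j; simp [h2, hE]
    simp [h1, h2, Fin.succAbove_zero, h3, mul_comm]
  have := hLH
  rw [Matrix.det_mul, hL, pow_succ] at this
  apply mul_left_cancel₀ h0
  rw [← this]; ring

/-- Integers can be reduced modulo `a` into `[-|a|/2, |a|/2]`. -/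
theorem exists_shift (a b : ℤ) (ha : a ≠ 0) : ∃ t : ℤ, 4 * (b + t * a) ^ 2 ≤ a ^ 2 := by
  have h1 := Int.emod_add_mul_ediv (2 * b + |a|) (2 * |a|)
  have hp : 0 < |a| := abs_pos.2 ha
  have h2 := Int.emod_nonneg (2 * b + |a|) (b := 2 * |a|) (by positivity)
  have h3 := Int.emod_lt_of_pos (2 * b + |a|) (b := 2 * |a|) (by positivity)
  set r := (2 * b + |a|) % (2 * |a|)
  set k := (2 * b + |a|) / (2 * |a|)
  obtain ⟨s, hs⟩ : ∃ s : ℤ, s * a = - (k * |a|) := by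
    rcases abs_choice a with h | h <;> rw [h]
    · exact ⟨-k, by ring⟩
    · exact ⟨k, by ring⟩
  refine ⟨s, ?_⟩
  have h4 : 2 * (b + s * a) = r - |a| := by rw [hs]; linarith
  have : (2 * (b + s * a)) ^ 2 ≤ |a| ^ 2 := by
    rw [h4]; apply sq_le_sq'  <;> linarith
  rw [sq_abs] at this; linarith

/-- Hermite's bound `|⟨v, v⟩| ≤ (4/3)^((N-1)/2) |det G|^(1/N)`, with `N = n + 1`, raised to the power
`N`; the form need not be definite, and `v` (the first column of `P`) is part of a basis. Taking
`|⟨v, v⟩|` minimal among primitive `v`, apply induction to the form `a ⟨y, y⟩ - ⟨v, y⟩²` with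
`a = ⟨v, v⟩` to get `y`, shift `y` by a multiple of `v` and compare `y` with `v`. The inequality is
trivial if `⟨v, v⟩ = 0`. -/
theorem hermite (n : ℕ) (G : Matrix (Fin (n + 1)) (Fin (n + 1)) ℤ) (hG : Gᵀ = G) :
    ∃ P : Matrix (Fin (n + 1)) (Fin (n + 1)) ℤ, IsUnit P.det ∧
      3 ^ ((n + 1).choose 2) * |(Pᵀ * G * P) 0 0| ^ (n + 1) ≤ 4 ^ ((n + 1).choose 2) * |G.det| := by
  induction n with
  | zero => exact ⟨1, by simp, by simp [Matrix.det_unique]⟩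
  | succ n ih =>
    classical
    let S : Set ℕ := {k | ∃ P : Matrix (Fin (n + 2)) (Fin (n + 2)) ℤ, IsUnit P.det ∧
      ((Pᵀ * G * P) 0 0).natAbs = k}
    have hS : S.Nonempty := ⟨_, 1, by simp, rfl⟩
    obtain ⟨P, hP, hPk⟩ := Nat.sInf_mem hS
    have hmin : ∀ P' : Matrix (Fin (n + 2)) (Fin (n + 2)) ℤ, IsUnit P'.det →
        |(Pᵀ * G * P) 0 0| ≤ |(P'ᵀ * G * P') 0 0| := by
      intro P' hP'
      have := Nat.sInf_le (s := S) ⟨P', hP', rfl⟩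
      rw [← hPk] at this
      rw [Int.abs_eq_natAbs, Int.abs_eq_natAbs]; exact_mod_cast this
    refine ⟨P, hP, ?_⟩
    rw [← abs_det_congr G P hP]
    have hHs := congr_symm hG P
    have hmin' : ∀ W : Matrix (Fin (n + 2)) (Fin (n + 2)) ℤ, IsUnit W.det →
        |(Pᵀ * G * P) 0 0| ≤ |(Wᵀ * (Pᵀ * G * P) * W) 0 0| := by
      intro W hW
      have := hmin (P * W) (by rw [Matrix.det_mul]; exact hP.mul hW)
      simpa [Matrix.transpose_mul, Matrix.mul_assoc] using this
    generalize Pᵀ * G * P = H at *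
    by_cases ha : H 0 0 = 0
    · rw [ha]; simp
    have hdet := det_schur n H ha
    set E : Matrix (Fin (n + 1)) (Fin (n + 1)) ℤ := Matrix.of fun i j =>
      H 0 0 * H i.succ j.succ - H i.succ 0 * H 0 j.succ with hE
    have hsy : ∀ i j, H i j = H j i := fun i j => by
      conv_lhs => rw [← hHs]
      rfl
    obtain ⟨Q, hQ, hQb⟩ := ih E (by
      ext i j
      simp only [hE, Matrix.transpose_apply, Matrix.of_apply]
      rw [hsy j.succ i.succ, hsy j.succ 0, hsy 0 i.succ]; ring)
    set a := H 0 0 with haa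
    set b := ∑ j : Fin (n + 1), H 0 j.succ * Q j 0 with hb
    set c := ∑ i : Fin (n + 1), ∑ j : Fin (n + 1), Q i 0 * H i.succ j.succ * Q j 0 with hc
    have he : (Qᵀ * E * Q) 0 0 = a * c - b ^ 2 := by
      rw [congr_apply, hc, hb, sq, Finset.sum_mul_sum, Finset.mul_sum, ← Finset.sum_sub_distrib]
      refine Finset.sum_congr rfl fun i _ => ?_
      rw [Finset.mul_sum, ← Finset.sum_sub_distrib]
      refine Finset.sum_congr rfl fun j _ => ?_
      simp only [hE, Matrix.of_apply]
      rw [hsy i.succ 0]; ring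
    obtain ⟨t, ht⟩ := exists_shift a b ha
    -- `W` has the shifted `y` as its first column, and `e₀` as its second
    let W' : Matrix (Fin (n + 2)) (Fin (n + 2)) ℤ := Matrix.of
      (Fin.cons (Fin.cons 1 (Pi.single 0 t)) fun i => Fin.cons 0 (Q i))
    have hW' : W'.det = Q.det := by
      rw [Matrix.det_succ_column_zero, Fin.sum_univ_succ]
      have : W'.submatrix Fin.succ Fin.succ = Q := by ext i j; simp [W']
      simp [W', Fin.succAbove_zero] at this ⊢
      rw [this]
    let W : Matrix (Fin (n + 2)) (Fin (n + 2)) ℤ := W'.submatrix id (Equiv.swap 0 1)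
    have hW : IsUnit W.det := by
      rw [Matrix.det_permute', hW']
      exact (Units.isUnit (Equiv.Perm.sign (Equiv.swap (0 : Fin (n + 2)) 1))).map (Int.castRingHom ℤ)
        |>.mul hQ
    have h1 := hmin' W hW
    have hW1 : ∀ i, W i 0 = W' i (Fin.succ 0) := by
      intro i; simp [W]
    have hW0 : W 0 0 = t := by rw [hW1]; simp [W', -Fin.succ_zero_eq_one, -Fin.succ_zero_eq_one']
    have hWs : ∀ i : Fin (n + 1), W i.succ 0 = Q i 0 := by
      intro i; rw [hW1]; simp [W', -Fin.succ_zero_eq_one, -Fin.succ_zero_eq_one']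
    have hval : (Wᵀ * H * W) 0 0 = c + 2 * t * b + t ^ 2 * a := by
      rw [congr_apply, Fin.sum_univ_succ]
      simp only [Fin.sum_univ_succ (n := n + 1), hW0, hWs, Finset.sum_add_distrib]
      have e1 : ∑ i : Fin (n + 1), Q i 0 * H i.succ 0 * t = t * b := by
        rw [hb, Finset.mul_sum]
        exact Finset.sum_congr rfl fun i _ => by rw [hsy i.succ 0]; ring
      have e2 : ∑ j : Fin (n + 1), t * H 0 j.succ * Q j 0 = t * b := by
        rw [hb, Finset.mul_sum]
        exact Finset.sum_congr rfl fun i _ => by ring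
      rw [e1, e2]; ring
    rw [hval] at h1
    set d := c + 2 * t * b + t ^ 2 * a with hd
    have h2 : a ^ 2 ≤ |a * d| := by
      rw [abs_mul, ← sq_abs, sq]
      exact mul_le_mul_of_nonneg_left h1 (abs_nonneg _)
    have h3 : a * d = (a * c - b ^ 2) + (b + t * a) ^ 2 := by rw [hd]; ring
    have h4 : 3 * a ^ 2 ≤ 4 * |a * c - b ^ 2| := by
      have := abs_add_le (a * c - b ^ 2) ((b + t * a) ^ 2)
      rw [← h3, abs_of_nonneg (sq_nonneg (b + t * a))] at this
      linarith
    rw [he, hdet, abs_mul, abs_pow] at hQb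
    have hap : 0 < |a| := abs_pos.2 ha
    have h5 : (3 * a ^ 2) ^ (n + 1) ≤ (4 * |a * c - b ^ 2|) ^ (n + 1) :=
      pow_le_pow_left₀ (by positivity) h4 _
    have hch : (n + 1 + 1).choose 2 = (n + 1).choose 2 + (n + 1) := by
      rw [Nat.choose_succ_succ' (n + 1) 1, Nat.choose_one_right, add_comm]
    rw [hch, pow_add, pow_add (4 : ℤ)]
    have hpos : 0 < |a| ^ n := by positivity
    refine le_of_mul_le_mul_left ?_ hpos
    rw [← sq_abs a] at h5
    calc |a| ^ n * (3 ^ (n + 1).choose 2 * 3 ^ (n + 1) * |a| ^ (n + 1 + 1))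
        = 3 ^ (n + 1).choose 2 * (3 * |a| ^ 2) ^ (n + 1) := by
          rw [mul_pow, ← pow_mul]; ring
      _ ≤ 3 ^ (n + 1).choose 2 * (4 * |a * c - b ^ 2|) ^ (n + 1) := by gcongr
      _ = 4 ^ (n + 1) * (3 ^ (n + 1).choose 2 * |a * c - b ^ 2| ^ (n + 1)) := by
          rw [mul_pow]; ring
      _ ≤ 4 ^ (n + 1) * (4 ^ (n + 1).choose 2 * (|a| ^ n * |H.det|)) := by gcongr
      _ = |a| ^ n * (4 ^ (n + 1).choose 2 * 4 ^ (n + 1) * |H.det|) := by ring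

/-! ### Even unimodular lattices of rank two and four -/

/-- `G` is the Gram matrix of an even symmetric form, encoded as `G = L + Lᵀ` with `L` integral: this
says that `G` is symmetric with even diagonal, and is visibly stable under base change. -/
def EvenGram {m : Type*} (G : Matrix m m ℤ) : Prop := ∃ L : Matrix m m ℤ, G = L + Lᵀ

theorem EvenGram.symm {m : Type*} {G : Matrix m m ℤ} (h : EvenGram G) : Gᵀ = G := by
  obtain ⟨L, rfl⟩ := h
  simp [add_comm]

theorem EvenGram.diag {m : Type*} {G : Matrix m m ℤ} (h : EvenGram G) (i : m) : Even (G i i) := by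
  obtain ⟨L, rfl⟩ := h
  exact ⟨L i i, by simp⟩

theorem EvenGram.congr {m n : Type*} [Fintype m] {G : Matrix m m ℤ} (h : EvenGram G)
    (P : Matrix m n ℤ) : EvenGram (Pᵀ * G * P) := by
  obtain ⟨L, rfl⟩ := h
  refine ⟨Pᵀ * L * P, ?_⟩
  simp [Matrix.mul_add, Matrix.add_mul, Matrix.transpose_mul, Matrix.mul_assoc]

theorem evenGram_of {m : Type*} [LinearOrder m] {G : Matrix m m ℤ} (hs : ∀ i j, G i j = G j i)
    (hd : ∀ i, Even (G i i)) : EvenGram G := by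
  choose k hk using hd
  refine ⟨Matrix.of fun i j => if i < j then G i j else if i = j then k i else 0, ?_⟩
  ext i j
  rcases lt_trichotomy i j with h | rfl | h
  · simp [h, h.not_gt, h.ne']
  · simp [hk]
  · simp [h, h.not_gt, h.ne', hs i j]

theorem even_small {x : ℤ} (h : Even x) (hx : |x| < 2) : x = 0 := by
  obtain ⟨k, rfl⟩ := h
  have := abs_lt.1 hx
  lia

/-- An even unimodular form of rank `2` is `U`: Hermite's bound `|⟨v, v⟩| < 2` yields a primitive
isotropic vector. -/
theorem unimodular_two (G : Matrix (Fin 2) (Fin 2) ℤ) (hG : EvenGram G) (hd : IsUnit G.det) :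
    ∃ P : Matrix (Fin 2) (Fin 2) ℤ, Pᵀ * G * P = UGram := by
  obtain ⟨P, hP, hb⟩ := hermite 1 G hG.symm
  have hH := hG.congr P
  have hdH : IsUnit (Pᵀ * G * P).det := by
    simp only [Matrix.det_mul, Matrix.det_transpose]; exact (hP.mul hd).mul hP
  rw [Int.isUnit_iff_abs_eq.1 hd] at hb
  suffices ∃ X : Matrix (Fin 2) (Fin 2) ℤ, Xᵀ * (Pᵀ * G * P) * X = UGram by
    obtain ⟨X, hX⟩ := this
    exact ⟨P * X, by rw [← hX]; simp [Matrix.transpose_mul, Matrix.mul_assoc]⟩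
  generalize Pᵀ * G * P = H at *
  have h00 : H 0 0 = 0 := by
    apply even_small (hH.diag 0)
    norm_num at hb
    rw [← sq_abs] at hb
    by_contra! h
    nlinarith
  have hs : H 1 0 = H 0 1 := congrFun (congrFun hH.symm 0) 1
  rw [Matrix.det_fin_two, h00, hs] at hdH
  have hb1 : H 0 1 * H 0 1 = 1 := by
    have : IsUnit (H 0 1) := isUnit_of_mul_isUnit_left (y := -H 0 1) (by simpa using hdH)
    exact Int.isUnit_mul_self this
  obtain ⟨k, hk⟩ := hH.diag 1
  refine ⟨!![H 0 1, -(k * H 0 1); 0, 1], ?_⟩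
  have : H = !![0, H 0 1; H 0 1, k + k] := by
    ext i j; fin_cases i <;> fin_cases j <;> simp [h00, hs, hk]
  rw [this, UGram]
  generalize H 0 1 = b at *
  ext i j
  fin_cases i <;> fin_cases j <;> simp [Matrix.mul_apply, Fin.sum_univ_two] <;> grind

/-- An even unimodular form of rank `4` is `U ⊕ U`: Hermite's bound `|⟨v, v⟩| < 2` yields a primitive
isotropic vector, hence a hyperbolic plane, which splits off. In particular no definite form
occurs. -/
theorem unimodular_four (C : Matrix (Fin 4) (Fin 4) ℤ) (hC : EvenGram C) (hd : IsUnit C.det) :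
    ∃ P : Matrix (Fin 4) (Fin 2 ⊕ Fin 2) ℤ, Pᵀ * C * P = Matrix.fromBlocks UGram 0 0 UGram := by
  obtain ⟨P, hP, hb⟩ := hermite 3 C hC.symm
  have hH := hC.congr P
  have hdH : IsUnit (Pᵀ * C * P).det := by
    simp only [Matrix.det_mul, Matrix.det_transpose]; exact (hP.mul hd).mul hP
  rw [Int.isUnit_iff_abs_eq.1 hd] at hb
  suffices ∃ X : Matrix (Fin 4) (Fin 2 ⊕ Fin 2) ℤ,
      Xᵀ * (Pᵀ * C * P) * X = Matrix.fromBlocks UGram 0 0 UGram by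
    obtain ⟨X, hX⟩ := this
    exact ⟨P * X, by rw [← hX]; simp [Matrix.transpose_mul, Matrix.mul_assoc]⟩
  generalize Pᵀ * C * P = H at *
  have h00 : H 0 0 = 0 := by
    apply even_small (hH.diag 0)
    have : Nat.choose (3 + 1) 2 = 6 := rfl
    rw [this] at hb
    by_contra! h
    have : (2 : ℤ) ^ (3 + 1) ≤ |H 0 0| ^ (3 + 1) := pow_le_pow_left₀ (by norm_num) h _
    norm_num at hb this
    linarith
  -- a vector `f` with `⟨e₀, f⟩ = 1`, made isotropic
  let B : (Fin 4 → ℤ) → (Fin 4 → ℤ) → ℤ := fun x y => x ⬝ᵥ H *ᵥ y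
  have hBs : ∀ x y, B x y = B y x := fun x y => by
    simp only [B]
    rw [Matrix.dotProduct_mulVec, ← Matrix.mulVec_transpose, hH.symm, dotProduct_comm]
  have hBe : ∀ x, Even (B x x) := fun x => by
    have := (hH.congr (Matrix.of fun (i : Fin 4) (_ : Unit) => x i)).diag ()
    rw [congr_apply] at this
    convert this using 1
    simp [B, dotProduct, Matrix.mulVec, Finset.mul_sum, mul_assoc]
  have hBadd : ∀ x y z, B x (y + z) = B x y + B x z := fun x y z => by
    simp [B, Matrix.mulVec_add]
  have hBsmul : ∀ (c : ℤ) x y, B x (c • y) = c * B x y := fun c x y => by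
    simp only [B, Matrix.mulVec_smul, dotProduct_smul, smul_eq_mul]
  set e : Fin 4 → ℤ := Pi.single 0 1 with he
  have hee : B e e = 0 := by simp [B, he, h00]
  obtain ⟨f, hef, hff⟩ : ∃ f, B e f = 1 ∧ B f f = 0 := by
    have h1 : B e (H⁻¹ *ᵥ e) = 1 := by
      simp only [B]
      rw [Matrix.mulVec_mulVec, Matrix.mul_nonsing_inv _ hdH]
      simp [he]
    obtain ⟨k, hk⟩ := hBe (H⁻¹ *ᵥ e)
    set f := H⁻¹ *ᵥ e
    refine ⟨f + (-k) • e, ?_, ?_⟩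
    · rw [hBadd, hBsmul, h1, hee]; ring
    · rw [hBadd, hBsmul, hBs _ f, hBs _ e, hBadd, hBadd, hBsmul, hBsmul, hk, hBs f e, h1, hee]; ring
  have hfe : B f e = 1 := by rw [hBs, hef]
  let ψ : (Fin 4 → ℤ) →ₗ[ℤ] (Fin 2 → ℤ) := LinearMap.pi ![
    { toFun := B e, map_add' := hBadd e, map_smul' := fun c x => hBsmul c _ x },
    { toFun := B f, map_add' := hBadd f, map_smul' := fun c x => hBsmul c _ x }]
  have hψ0 : ∀ x, ψ x 0 = B e x := fun x => rfl
  have hψ1 : ∀ x, ψ x 1 = B f x := fun x => rfl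
  have hker : ∀ x, x ∈ LinearMap.ker ψ ↔ B e x = 0 ∧ B f x = 0 := fun x => by
    rw [LinearMap.mem_ker, funext_iff, Fin.forall_fin_two]; rfl
  have hrank : finrank ℤ (LinearMap.ker ψ) = 2 := by
    have h1 := Submodule.finrank_quotient_add_finrank (LinearMap.ker ψ)
    have h2 : Function.Surjective ψ := by
      intro y
      refine ⟨y 0 • f + y 1 • e, ?_⟩
      funext i
      fin_cases i
      · simp only [Fin.zero_eta, hψ0, hBadd, hBsmul, hef, hee]; ring
      · simp only [Fin.mk_one, hψ1, hBadd, hBsmul, hff, hfe]; ring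
    rw [(ψ.quotKerEquivOfSurjective h2).finrank_eq] at h1
    simp at h1
    lia
  let b := Module.finBasisOfFinrankEq ℤ (LinearMap.ker ψ) hrank
  have hbe : ∀ i, B e (b i).1 = 0 := fun i => ((hker _).1 (b i).2).1
  have hbf : ∀ i, B f (b i).1 = 0 := fun i => ((hker _).1 (b i).2).2
  let col : Fin 2 ⊕ Fin 2 → Fin 4 → ℤ := Sum.elim ![e, f] fun i => (b i).1
  let X : Matrix (Fin 4) (Fin 2 ⊕ Fin 2) ℤ := (Matrix.of col)ᵀ
  have hX : ∀ i j, (Xᵀ * H * X) i j = B (col i) (col j) := fun i j => by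
    rw [congr_apply]
    simp [B, X, dotProduct, Matrix.mulVec, Finset.mul_sum, mul_assoc]
  let C' : Matrix (Fin 2) (Fin 2) ℤ := (Xᵀ * H * X).toBlocks₂₂
  have hXb : Xᵀ * H * X = Matrix.fromBlocks UGram 0 0 C' := by
    rw [← Matrix.fromBlocks_toBlocks (Xᵀ * H * X)]
    congr 1
    · ext i j
      rw [Matrix.toBlocks₁₁, Matrix.of_apply, hX]
      fin_cases i <;> fin_cases j <;> simp [col, UGram, hee, hef, hfe, hff]
    · ext i j
      rw [Matrix.toBlocks₁₂, Matrix.of_apply, hX]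
      fin_cases i <;> simp [col, hbe, hbf]
    · ext i j
      rw [Matrix.toBlocks₂₁, Matrix.of_apply, hX]
      fin_cases j <;> simp [col, hBs _ e, hBs _ f, hbe, hbf]
  -- the columns of `X` span
  have hspan : ∀ x : Fin 4 → ℤ, ∃ r : Fin 2 ⊕ Fin 2 → ℤ, X *ᵥ r = x := by
    intro x
    have hm : x + (-(B f x) • e + -(B e x) • f) ∈ LinearMap.ker ψ := by
      rw [hker]; simp only [hBadd, hBsmul, hee, hef, hff, hfe]; constructor <;> ring
    obtain ⟨c, hc⟩ : ∃ c : Fin 2 → ℤ, ∑ i, c i • b i = ⟨_, hm⟩ := ⟨_, b.sum_repr _⟩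
    refine ⟨Sum.elim ![B f x, B e x] c, ?_⟩
    have h1 := congrArg Subtype.val hc
    rw [Fin.sum_univ_two] at h1
    simp only [Submodule.coe_add, Submodule.coe_smul] at h1
    funext i
    have h2 := congrFun h1 i
    simp only [Pi.add_apply, Pi.smul_apply, smul_eq_mul] at h2
    simp only [Matrix.mulVec, dotProduct, Fintype.sum_sum_type, Fin.sum_univ_two, X, col,
      Matrix.transpose_apply, Matrix.of_apply, Sum.elim_inl, Sum.elim_inr]
    simp
    linarith
  choose r hr using fun j : Fin 4 => hspan (Pi.single j 1)
  let R : Matrix (Fin 2 ⊕ Fin 2) (Fin 4) ℤ := (Matrix.of r)ᵀ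
  have hXR : X * R = 1 := by
    ext i j
    have := congrFun (hr j) i
    simpa [Matrix.mulVec, dotProduct, Matrix.mul_apply, R, Matrix.one_apply, Pi.single_apply] using this
  have hRX : R * X = 1 := (Matrix.mul_eq_one_comm_of_equiv finSumFinEquiv).2 hXR
  have hdet : IsUnit (Xᵀ * H * X).det := by
    have : (Xᵀ * H * X) * (R * H⁻¹ * Rᵀ) = 1 := by
      calc (Xᵀ * H * X) * (R * H⁻¹ * Rᵀ) = Xᵀ * (H * ((X * R) * H⁻¹)) * Rᵀ := by
            simp only [Matrix.mul_assoc]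
        _ = 1 := by
            rw [hXR, Matrix.one_mul, Matrix.mul_nonsing_inv _ hdH, Matrix.mul_one,
              ← Matrix.transpose_mul, hRX, Matrix.transpose_one]
    exact IsUnit.of_mul_eq_one _ (by rw [← Matrix.det_mul, this, Matrix.det_one])
  have hC'd : IsUnit C'.det := by
    rw [hXb, Matrix.det_fromBlocks_zero₂₁] at hdet
    exact isUnit_of_mul_isUnit_right hdet
  have hC'e : EvenGram C' := by
    obtain ⟨L, hL⟩ := hH.congr X
    exact ⟨L.toBlocks₂₂, by ext i j; simp [C', hL, Matrix.toBlocks₂₂]⟩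
  obtain ⟨Q, hQ⟩ := unimodular_two C' hC'e hC'd
  let F : Matrix (Fin 2 ⊕ Fin 2) (Fin 2 ⊕ Fin 2) ℤ := Matrix.fromBlocks 1 0 0 Q
  refine ⟨X * F, ?_⟩
  calc (X * F)ᵀ * H * (X * F) = Fᵀ * (Xᵀ * H * X) * F := by
        simp only [Matrix.transpose_mul, Matrix.mul_assoc]
    _ = _ := by
        rw [hXb, Matrix.fromBlocks_transpose, Matrix.fromBlocks_multiply,
          Matrix.fromBlocks_multiply]
        simp [hQ]

/-! ### Recognizing `U ⊕ U(2)` -/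

/-- Every vector of `U ⊕ U` with `⟨w, w⟩ ≡ 0 mod 4` that is nonzero modulo `2` is congruent modulo
`2` to the first vector of some hyperbolic basis. -/
theorem exists_hyperbolic_lift (w : Fin 2 ⊕ Fin 2 → ℤ) (hw : ∃ i, Odd (w i))
    (hq : Even (w (.inl 0) * w (.inl 1) + w (.inr 0) * w (.inr 1))) :
    ∃ W : Matrix (Fin 2 ⊕ Fin 2) (Fin 2 ⊕ Fin 2) ℤ,
      Wᵀ * Matrix.fromBlocks UGram 0 0 UGram * W = Matrix.fromBlocks UGram 0 0 UGram ∧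
      ∀ i, Even (W i (.inl 0) - w i) := by
  -- the isometry whose first column is `(1, -cd, c, d)`
  have key : ∀ c d : ℤ, ∃ W : Matrix (Fin 2 ⊕ Fin 2) (Fin 2 ⊕ Fin 2) ℤ,
      Wᵀ * Matrix.fromBlocks UGram 0 0 UGram * W = Matrix.fromBlocks UGram 0 0 UGram ∧
      W (.inl 0) (.inl 0) = 1 ∧ W (.inl 1) (.inl 0) = -(c * d) ∧ W (.inr 0) (.inl 0) = c ∧
      W (.inr 1) (.inl 0) = d := by
    intro c d
    refine ⟨Matrix.fromBlocks !![1, 0; -(c * d), 1] !![0, 0; -d, -c] !![c, 0; d, 0] 1, ?_,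
      by simp, by simp, by simp, by simp⟩
    rw [Matrix.fromBlocks_transpose, Matrix.fromBlocks_multiply, Matrix.fromBlocks_multiply]
    congr 1 <;> ext i j <;> fin_cases i <;> fin_cases j <;>
      simp [UGram, Matrix.mul_apply, Fin.sum_univ_two] <;> ring
  -- permuting the coordinates of `U ⊕ U`
  have perm : ∀ σ : Equiv.Perm (Fin 2 ⊕ Fin 2),
      (Matrix.fromBlocks UGram 0 0 UGram).submatrix σ σ = Matrix.fromBlocks UGram 0 0 UGram →
      Odd (w (σ (.inl 0))) →
      Even (w (σ (.inl 0)) * w (σ (.inl 1)) + w (σ (.inr 0)) * w (σ (.inr 1))) →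
      ∃ W : Matrix (Fin 2 ⊕ Fin 2) (Fin 2 ⊕ Fin 2) ℤ,
        Wᵀ * Matrix.fromBlocks UGram 0 0 UGram * W = Matrix.fromBlocks UGram 0 0 UGram ∧
        ∀ i, Even (W i (.inl 0) - w i) := by
    intro σ hσ h1 h2
    obtain ⟨W, hW, w1, w2, w3, w4⟩ := key (w (σ (.inr 0))) (w (σ (.inr 1)))
    refine ⟨W.submatrix σ.symm id, ?_, ?_⟩
    · have hF : Matrix.fromBlocks UGram 0 0 UGram =
          (Matrix.fromBlocks UGram 0 0 UGram).submatrix σ.symm σ.symm := by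
        conv_rhs => rw [← hσ]
        simp
      conv_lhs => rw [hF]
      rw [Matrix.transpose_submatrix, Matrix.submatrix_mul_equiv, Matrix.submatrix_mul_equiv, hW]
      simp
    · intro i
      obtain ⟨j, rfl⟩ := σ.surjective i
      simp only [Matrix.submatrix_apply, Equiv.symm_apply_apply, id]
      rcases j with j | j <;> fin_cases j <;> simp only [Fin.zero_eta, Fin.mk_one, w1, w2, w3, w4]
      · have := h1.sub_odd odd_one
        rw [← neg_sub]; exact this.neg
      · have hb : Even (w (σ (.inr 0)) * w (σ (.inr 1)) - -w (σ (.inl 1))) := by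
          have h3 := h1.sub_odd odd_one
          have : w (σ (.inr 0)) * w (σ (.inr 1)) - -w (σ (.inl 1)) =
            (w (σ (.inl 0)) * w (σ (.inl 1)) + w (σ (.inr 0)) * w (σ (.inr 1))) -
              (w (σ (.inl 0)) - 1) * w (σ (.inl 1)) := by ring
          rw [this]
          exact h2.sub (h3.mul_right _)
        have : -(w (σ (.inr 0)) * w (σ (.inr 1))) - w (σ (.inl 1)) =
          -(w (σ (.inr 0)) * w (σ (.inr 1)) + w (σ (.inl 1))) := by ring
        rw [this, ← sub_neg_eq_add]
        exact hb.neg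
      · simp
      · simp
  obtain ⟨i, hi⟩ := hw
  rcases i with i | i <;> fin_cases i
  · exact perm 1 (by simp) hi hq
  · refine perm (Equiv.swap (.inl 0) (.inl 1)) (by decide +kernel) (by simpa using hi) ?_
    have h1 : Equiv.swap (Sum.inl 0 : Fin 2 ⊕ Fin 2) (.inl 1) (.inr 0) = .inr 0 := by decide
    have h2 : Equiv.swap (Sum.inl 0 : Fin 2 ⊕ Fin 2) (.inl 1) (.inr 1) = .inr 1 := by decide
    simpa [h1, h2, mul_comm] using hq
  · refine perm (Equiv.sumComm _ _) (by decide +kernel) (by simpa using hi) ?_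
    simpa [add_comm] using hq
  · refine perm ((Equiv.sumComm _ _).trans (Equiv.swap (.inr 0) (.inr 1))) (by decide +kernel)
      (by simpa using hi) ?_
    have h1 : Equiv.swap (Sum.inr 0 : Fin 2 ⊕ Fin 2) (.inr 1) (.inl 0) = .inl 0 := by decide
    have h2 : Equiv.swap (Sum.inr 0 : Fin 2 ⊕ Fin 2) (.inr 1) (.inl 1) = .inl 1 := by decide
    simpa [h1, h2, add_comm, mul_comm] using hq

/-- A rank-four form of determinant `± 4` is `U ⊕ U(2)` as soon as it is even and `⟨x, y⟩ ∈ 2ℤ`,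
`⟨x, x⟩ ∈ 4ℤ` on the index-two sublattice `K = ⟨2c₀, c₁, c₂, c₃⟩`. Indeed `K(½)` is then even
unimodular, so it is `U ⊕ U`, and `2c₀` can be moved, modulo `2K`, to the first vector of a
hyperbolic basis of `K(½)`; half of that vector and the other three form the desired frame. -/
theorem exists_UU2_frame (G : Matrix (Fin 4) (Fin 4) ℤ) (hs : ∀ i j, G i j = G j i)
    (h00 : Even (G 0 0)) (hij : ∀ i j : Fin 3, Even (G i.succ j.succ))
    (hii : ∀ i : Fin 3, 4 ∣ G i.succ i.succ) (hd : |G.det| = 4) :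
    ∃ P : Matrix (Fin 4) (Fin 2 ⊕ Fin 2) ℤ, Pᵀ * G * P = UU2Gram := by
  -- `C` is half of the Gram matrix of the sublattice spanned by `2c₀, c₁, c₂, c₃`
  let s : Fin 4 → ℤ := ![2, 1, 1, 1]
  have hdvd : ∀ i j, (2 : ℤ) ∣ s i * G i j * s j := by
    intro i j
    induction i using Fin.cases with
    | zero => exact ⟨G 0 j * s j, by simp [s]; ring⟩
    | succ i =>
      induction j using Fin.cases with
      | zero => exact ⟨s i.succ * G i.succ 0, by simp [s]; ring⟩
      | succ j => exact ((hij i j).two_dvd.mul_left _).mul_right _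
  choose C0 hC0 using hdvd
  let C : Matrix (Fin 4) (Fin 4) ℤ := Matrix.of C0
  have hC : (2 : ℤ) • C = Matrix.diagonal s * G * Matrix.diagonal s := by
    ext i j
    simp [C, Matrix.diagonal_mul, Matrix.mul_diagonal, ← hC0 i j]
  have hCij : ∀ i j, 2 * C i j = s i * G i j * s j := fun i j => (hC0 i j).symm
  have hC00 : C 0 0 = 2 * G 0 0 := by
    have := hCij 0 0
    simp [s] at this; linarith
  have hCe : EvenGram C := by
    refine evenGram_of (fun i j => ?_) (fun i => ?_)
    · have h1 := hCij i j
      have h2 := hCij j i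
      rw [hs j i] at h2
      linarith [mul_right_comm (s i) (G i j) (s j), mul_comm (s i * s j) (G i j),
        mul_right_comm (s j) (G i j) (s i), mul_comm (s j * s i) (G i j), mul_comm (s i) (s j)]
    · induction i using Fin.cases with
      | zero => rw [hC00]; exact even_two_mul _
      | succ i =>
        obtain ⟨k, hk⟩ := hii i
        have h1 := hCij i.succ i.succ
        have h2 : s i.succ = 1 := by fin_cases i <;> rfl
        rw [h2, hk] at h1
        exact ⟨k, by linarith⟩
  have hCd : IsUnit C.det := by
    have h1 := congrArg Matrix.det hC
    rw [Matrix.det_smul, Matrix.det_mul, Matrix.det_mul, Matrix.det_diagonal] at h1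
    simp [Fin.prod_univ_four, s] at h1
    rw [Int.isUnit_iff_abs_eq]
    have h2 : 16 * |C.det| = 16 := by
      rw [show (16 : ℤ) * |C.det| = |16 * C.det| by rw [abs_mul]; rfl, h1, abs_mul, abs_mul, hd]
      rfl
    linarith
  obtain ⟨A, hA⟩ := unimodular_four C hCe hCd
  let F : Matrix (Fin 2 ⊕ Fin 2) (Fin 2 ⊕ Fin 2) ℤ := Matrix.fromBlocks UGram 0 0 UGram
  have hA : Aᵀ * C * A = F := hA
  have hFF : F * F = 1 := by decide +kernel
  -- `A` is invertible, so the coordinate vector `V · 0` of `2c₀` is nonzero modulo `2`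
  have hinv : A * (F * Aᵀ * C) = 1 := by
    refine (Matrix.mul_eq_one_comm_of_equiv (finSumFinEquiv (m := 2) (n := 2)).symm).2 ?_
    calc F * Aᵀ * C * A = F * (Aᵀ * C * A) := by simp only [Matrix.mul_assoc]
      _ = 1 := by rw [hA, hFF]
  let V : Matrix (Fin 2 ⊕ Fin 2) (Fin 4) ℤ := F * Aᵀ * C
  have hAV : A * V = 1 := hinv
  have hVF : Vᵀ * F * V = C := by
    calc Vᵀ * F * V = (A * V)ᵀ * C * (A * V) := by
          rw [← hA]; simp only [Matrix.transpose_mul, Matrix.mul_assoc]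
      _ = C := by rw [hAV]; simp
  have hw : ∃ i, Odd (V i 0) := by
    by_contra! h
    have h1 := congrFun (congrFun hAV 0) 0
    rw [Matrix.mul_apply] at h1
    have h2 : Even (∑ j, A 0 j * V j 0) :=
      Finset.even_sum _ fun j _ => (Int.not_odd_iff_even.1 (h j)).mul_left _
    rw [h1] at h2
    simp at h2
  have hq : Even (V (.inl 0) 0 * V (.inl 1) 0 + V (.inr 0) 0 * V (.inr 1) 0) := by
    have h1 := congrFun (congrFun hVF 0) 0
    rw [congr_apply, hC00] at h1
    obtain ⟨k, hk⟩ := h00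
    simp [F, UGram, Fin.sum_univ_two] at h1
    exact ⟨k, by linarith⟩
  obtain ⟨W, hW, hWc⟩ := exists_hyperbolic_lift (fun i => V i 0) hw hq
  have hW : Wᵀ * F * W = F := hW
  choose u hu using hWc
  let Y : Matrix (Fin 4) (Fin 2 ⊕ Fin 2) ℤ := A * W
  have hY : Yᵀ * C * Y = F := by
    calc Yᵀ * C * Y = Wᵀ * (Aᵀ * C * A) * W := by
          simp only [Y, Matrix.transpose_mul, Matrix.mul_assoc]
      _ = F := by rw [hA, hW]
  have hY0 : ∀ i, ∃ z, s i * Y i (.inl 0) = 2 * z := by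
    intro i
    have h1 : Y i (.inl 0) = (1 : Matrix (Fin 4) (Fin 4) ℤ) i 0 + 2 * ∑ j, A i j * u j := by
      rw [← hAV, show Y i (.inl 0) = (A * W) i (.inl 0) from rfl, Matrix.mul_apply, Matrix.mul_apply,
        Finset.mul_sum, ← Finset.sum_add_distrib]
      refine Finset.sum_congr rfl fun j _ => ?_
      have := hu j
      rw [show W j (.inl 0) = V j 0 + 2 * u j by linarith]; ring
    induction i using Fin.cases with
    | zero => exact ⟨Y 0 (.inl 0), by simp [s]⟩
    | succ i =>
      refine ⟨s i.succ * ∑ j, A i.succ j * u j, ?_⟩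
      rw [h1, Matrix.one_apply_ne (Fin.succ_ne_zero i)]; ring
  choose z hz using hY0
  -- the hyperbolic basis in the coordinates `c₀, …, c₃`, with its first vector halved
  let t : Fin 2 ⊕ Fin 2 → ℤ := Sum.elim ![2, 1] ![1, 1]
  let P : Matrix (Fin 4) (Fin 2 ⊕ Fin 2) ℤ :=
    Matrix.of fun i j => if j = .inl 0 then z i else s i * Y i j
  have hP : P * Matrix.diagonal t = Matrix.diagonal s * Y := by
    ext i j
    rw [Matrix.mul_diagonal, Matrix.diagonal_mul]
    rcases j with j | j <;> fin_cases j <;> simp [P, t, hz]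
    ring
  have hPG : Matrix.diagonal t * (Pᵀ * G * P) * Matrix.diagonal t = (2 : ℤ) • F := by
    calc _ = (P * Matrix.diagonal t)ᵀ * G * (P * Matrix.diagonal t) := by
          simp only [Matrix.transpose_mul, Matrix.diagonal_transpose, Matrix.mul_assoc]
      _ = Yᵀ * (Matrix.diagonal s * G * Matrix.diagonal s) * Y := by
          rw [hP]
          simp only [Matrix.transpose_mul, Matrix.diagonal_transpose, Matrix.mul_assoc]
      _ = _ := by rw [← hC, Matrix.mul_smul, Matrix.smul_mul, hY]
  refine ⟨P, ?_⟩
  ext i j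
  have := congrFun (congrFun hPG i) j
  rw [Matrix.mul_diagonal, Matrix.diagonal_mul, Matrix.smul_apply] at this
  rcases i with i | i <;> rcases j with j | j <;> fin_cases i <;> fin_cases j <;>
    simp [t, F, UGram, UU2Gram] at this ⊢ <;> linarith

/-! ### Lattices with an operator killed by `Φ₁₅` -/

theorem cyclotomic_fifteen_eq :
    cyclotomic 15 ℤ = X ^ 8 - X ^ 7 + X ^ 5 - X ^ 4 + X ^ 3 - X + 1 := by
  have h := prod_cyclotomic_eq_X_pow_sub_one (n := 15) (by norm_num) ℤ
  have hd : Nat.divisors 15 = {1, 3, 5, 15} := by decide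
  rw [hd] at h
  simp only [Finset.prod_insert, Finset.mem_insert, Finset.mem_singleton, Finset.prod_singleton,
    cyclotomic_one, cyclotomic_three, show ¬ (1 = 3 ∨ 1 = 5 ∨ 1 = 15) by decide,
    show ¬ (3 = 5 ∨ 3 = 15) by decide, show ¬ (5 = 15) by decide, not_false_eq_true] at h
  have h5 : cyclotomic 5 ℤ = X ^ 4 + X ^ 3 + X ^ 2 + X + 1 := by
    have : Fact (Nat.Prime 5) := ⟨by norm_num⟩
    rw [cyclotomic_prime]
    simp [Finset.sum_range_succ]; ring
  rw [h5] at h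
  have hne : ((X : ℤ[X]) - 1) * (X ^ 2 + X + 1) * (X ^ 4 + X ^ 3 + X ^ 2 + X + 1) ≠ 0 := by
    intro h0
    have := congrArg (Polynomial.eval 2) h0
    norm_num at this
  apply mul_left_cancel₀ hne
  calc _ = (X - 1) * ((X ^ 2 + X + 1) * ((X ^ 4 + X ^ 3 + X ^ 2 + X + 1) * cyclotomic 15 ℤ)) := by
        ring
    _ = X ^ 15 - 1 := h
    _ = _ := by ring

/-- A `ℤ[ζ₁₅]`-module that is free over `ℤ` has rank divisible by `4`: with `y = ζ₁₅³ = ζ₅` the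
elements `1 - yⁱ` are associated and multiply to `5`, so `det (1 - y)⁴ = ± 5^m`. -/
theorem four_dvd_of_phi15 (m : ℕ) (H : Matrix (Fin m) (Fin m) ℤ)
    (hH : aeval H (cyclotomic 15 ℤ) = 0) : 4 ∣ m := by
  have h0 : aeval (H ^ 3) (X ^ 4 + X ^ 3 + X ^ 2 + X + 1 : ℤ[X]) = 0 := by
    have h1 : (X ^ 4 + X ^ 3 + X ^ 2 + X + 1 : ℤ[X]).comp (X ^ 3) =
        (X ^ 4 + X ^ 3 + X ^ 2 + X + 1) * cyclotomic 15 ℤ := by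
      rw [cyclotomic_fifteen_eq]; simp; ring
    have h2 := congrArg (aeval H) h1
    rw [aeval_comp, map_mul, hH, mul_zero] at h2
    simpa using h2
  -- `p(H³)` has determinant `± 1` as soon as `p` is invertible modulo `Φ₅`
  have key : ∀ p q s : ℤ[X], p * q = 1 + (X ^ 4 + X ^ 3 + X ^ 2 + X + 1) * s →
      |(aeval (H ^ 3) p).det| = 1 := by
    intro p q s h
    have := congrArg (aeval (H ^ 3)) h
    rw [map_mul, map_add, map_mul, h0, zero_mul, add_zero, map_one] at this
    rw [← Int.isUnit_iff_abs_eq]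
    exact IsUnit.of_mul_eq_one _ (by rw [← Matrix.det_mul, this, Matrix.det_one])
  have k2 := key (1 + X) (-(X + X ^ 3)) (-1) (by ring)
  have k3 := key (1 + X + X ^ 2) (1 + X ^ 3) X (by ring)
  have k4 := key (1 + X + X ^ 2 + X ^ 3) (-X) (-1) (by ring)
  have h5 : aeval (H ^ 3) ((1 - X) * ((1 - X) * (1 + X)) * ((1 - X) * (1 + X + X ^ 2)) *
      ((1 - X) * (1 + X + X ^ 2 + X ^ 3)) : ℤ[X]) = aeval (H ^ 3) (5 : ℤ[X]) := by
    rw [← sub_eq_zero, ← map_sub, show ((1 - X) * ((1 - X) * (1 + X)) * ((1 - X) * (1 + X + X ^ 2)) *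
      ((1 - X) * (1 + X + X ^ 2 + X ^ 3)) : ℤ[X]) - 5 = (X ^ 4 + X ^ 3 + X ^ 2 + X + 1) *
      (X ^ 6 - 2 * X ^ 5 + X ^ 3 + 3 * X - 4) by ring, map_mul, h0, zero_mul]
  have h6 := congrArg (fun M => |Matrix.det M|) h5
  simp only [map_mul, Matrix.det_mul, abs_mul, k2, k3, k4, mul_one] at h6
  have h7 : (aeval (H ^ 3) (5 : ℤ[X])).det = 5 ^ m := by
    have : aeval (H ^ 3) (5 : ℤ[X]) = (5 : ℤ) • (1 : Matrix (Fin m) (Fin m) ℤ) := by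
      rw [show (5 : ℤ[X]) = C 5 from rfl, aeval_C, Algebra.algebraMap_eq_smul_one]
    rw [this, Matrix.det_smul]; simp
  rw [h7, abs_pow] at h6
  set d := (aeval (H ^ 3) (1 - X : ℤ[X])).det
  have h8 : d.natAbs ^ 4 = 5 ^ m := by
    zify
    rw [show |(5 : ℤ)| = 5 from rfl] at h6
    linarith [h6, show |d| ^ 4 = |d| * |d| * |d| * |d| by ring]
  obtain ⟨k, _, hk⟩ := (Nat.dvd_prime_pow (by norm_num : Nat.Prime 5)).1
    (h8 ▸ dvd_pow_self _ (by norm_num) : d.natAbs ∣ 5 ^ m)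
  rw [hk, ← pow_mul] at h8
  exact ⟨k, by have := Nat.pow_right_injective (le_refl 2 |>.trans (by norm_num : 2 ≤ 5)) h8; lia⟩

/-- `Φ₁₅` has degree `8` and is irreducible over `ℚ`, so it is the minimal polynomial of `H`. -/
theorem eight_le_of_phi15 (m : ℕ) (hm : m ≠ 0) (H : Matrix (Fin m) (Fin m) ℤ)
    (hH : aeval H (cyclotomic 15 ℤ) = 0) : 8 ≤ m := by
  have : NeZero m := ⟨hm⟩
  let Hq : Matrix (Fin m) (Fin m) ℚ := H.map (Int.castRingHom ℚ)
  have h1 : aeval Hq (cyclotomic 15 ℚ) = 0 := by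
    have h2 := congrArg (Int.castRingHom ℚ).mapMatrix hH
    rw [cyclotomic_fifteen_eq] at h2
    have hmap : (Int.castRingHom ℚ).mapMatrix H = Hq := rfl
    simp only [map_add, map_sub, map_pow, map_one, map_zero, aeval_X, hmap] at h2
    have h3 : cyclotomic 15 ℚ = X ^ 8 - X ^ 7 + X ^ 5 - X ^ 4 + X ^ 3 - X + 1 := by
      rw [← map_cyclotomic_int, cyclotomic_fifteen_eq]; simp
    rw [h3]
    simpa using h2
  have h2 := minpoly.dvd ℚ Hq h1
  have h3 : Irreducible (cyclotomic 15 ℚ) := cyclotomic.irreducible_rat (by norm_num)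
  have h4 : Associated (minpoly ℚ Hq) (cyclotomic 15 ℚ) :=
    ((h3.dvd_iff.1 h2).resolve_left (minpoly.not_isUnit ℚ Hq)).symm
  have h5 := natDegree_eq_of_degree_eq (degree_eq_degree_of_associated h4)
  rw [natDegree_cyclotomic, show Nat.totient 15 = 8 by decide] at h5
  have h6 := natDegree_le_of_dvd (Matrix.minpoly_dvd_charpoly Hq) (Matrix.charpoly_monic Hq).ne_zero
  rw [Matrix.charpoly_natDegree_eq_dim, Fintype.card_fin, h5] at h6
  exact h6

/-- The matrix of `g` acting on `ker Φ₁₅(g)` is again killed by `Φ₁₅`. -/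
theorem exists_restrict_matrix {g : Matrix I12 I12 ℤ} {m : ℕ}
    (bS : Basis (Fin m) ℤ (LinearMap.ker (aeval g (cyclotomic 15 ℤ)).mulVecLin)) :
    ∃ H : Matrix (Fin m) (Fin m) ℤ, aeval H (cyclotomic 15 ℤ) = 0 := by
  have hcomm : ∀ x ∈ LinearMap.ker (aeval g (cyclotomic 15 ℤ)).mulVecLin,
      g.mulVecLin x ∈ LinearMap.ker (aeval g (cyclotomic 15 ℤ)).mulVecLin := by
    intro x hx
    rw [LinearMap.mem_ker, Matrix.mulVecLin_apply] at hx ⊢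
    have h1 : aeval g (cyclotomic 15 ℤ) * g = g * aeval g (cyclotomic 15 ℤ) := by
      simpa using congrArg (aeval g) (mul_comm (cyclotomic 15 ℤ) X)
    rw [Matrix.mulVecLin_apply, Matrix.mulVec_mulVec, h1, ← Matrix.mulVec_mulVec, hx,
      Matrix.mulVec_zero]
  let f := g.mulVecLin.restrict hcomm
  have hf : ∀ (k : ℕ) x, ((f ^ k) x).1 = g ^ k *ᵥ x.1 := by
    intro k
    induction k with
    | zero => simp
    | succ k ih =>
      intro x
      rw [pow_succ, Module.End.mul_apply, ih, pow_succ, ← Matrix.mulVec_mulVec]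
      rfl
  have hf1 : ∀ x, (f x).1 = g *ᵥ x.1 := fun x => rfl
  refine ⟨LinearMap.toMatrixAlgEquiv bS f, ?_⟩
  have h0 : aeval f (cyclotomic 15 ℤ) = 0 := by
    ext1 x
    apply Subtype.ext
    obtain ⟨x, hx0⟩ := x
    have hx := hx0
    rw [LinearMap.mem_ker, Matrix.mulVecLin_apply] at hx
    have h1 := cyclotomic_fifteen_eq
    rw [h1] at hx
    rw [show aeval f (cyclotomic 15 ℤ) = aeval f _ from congrArg _ h1]
    simp only [map_add, map_sub, map_pow, aeval_X, map_one, Matrix.add_mulVec, Matrix.sub_mulVec,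
      Matrix.one_mulVec] at hx
    simp only [map_add, map_sub, map_pow, aeval_X, map_one, LinearMap.add_apply,
      LinearMap.sub_apply, Module.End.one_apply, Submodule.coe_add, Submodule.coe_sub, hf, hf1,
      LinearMap.zero_apply, Submodule.coe_zero]
    exact hx
  have := congrArg (LinearMap.toMatrixAlgEquiv bS) h0
  rw [map_zero] at this
  rw [← this]
  exact Polynomial.aeval_algHom_apply (LinearMap.toMatrixAlgEquiv bS).toAlgHom f _

/-! ### The form of `N` -/

theorem NGram_transpose : NGramᵀ = NGram := by
  simp only [NGram, Matrix.fromBlocks_transpose, Matrix.transpose_zero, Matrix.transpose_smul,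
    CartanMatrix.E₈_transpose]
  rw [show UGramᵀ = UGram by decide]

theorem NBilin_eq (x y : I12 → ℤ) : NBilin x y = x ⬝ᵥ NGram *ᵥ y := Matrix.toBilin'_apply' _ _ _

theorem NBilin_comm (x y : I12 → ℤ) : NBilin x y = NBilin y x := by
  rw [NBilin_eq, NBilin_eq, Matrix.dotProduct_mulVec, ← Matrix.mulVec_transpose, NGram_transpose,
    dotProduct_comm]

theorem NBilin_formula (x y : I12 → ℤ) : NBilin x y =
    x (.inl (.inl 0)) * y (.inl (.inl 1)) + x (.inl (.inl 1)) * y (.inl (.inl 0)) +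
    2 * (x (.inl (.inr 0)) * y (.inl (.inr 1)) + x (.inl (.inr 1)) * y (.inl (.inr 0)) -
      (fun i => x (.inr i)) ⬝ᵥ CartanMatrix.E₈ *ᵥ (fun i => y (.inr i))) := by
  rw [NBilin_eq]
  simp only [dotProduct, Matrix.mulVec, Fintype.sum_sum_type, Fin.sum_univ_two, NGram]
  simp [UGram, -zsmul_eq_mul, mul_assoc, ← Finset.mul_sum, mul_left_comm _ (2 : ℤ)]
  ring

/-- Half of the quadratic form of `E₈`. -/
def qE8 (y : Fin 8 → ℤ) : ℤ :=
  y 0 ^ 2 + y 1 ^ 2 + y 2 ^ 2 + y 3 ^ 2 + y 4 ^ 2 + y 5 ^ 2 + y 6 ^ 2 + y 7 ^ 2 -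
    (y 0 * y 2 + y 2 * y 3 + y 3 * y 4 + y 4 * y 5 + y 5 * y 6 + y 6 * y 7 + y 1 * y 3)

theorem E8_self (y : Fin 8 → ℤ) : y ⬝ᵥ CartanMatrix.E₈ *ᵥ y = 2 * qE8 y := by
  simp only [dotProduct, Matrix.mulVec, Fin.sum_univ_eight, CartanMatrix.E₈, qE8]
  simp
  ring

/-- Completion of squares, from the leaves of the `E₈` diagram towards the branching node `3`. -/
theorem qE8_sos (y : Fin 8 → ℤ) : 120 * qE8 y = 30 * (2 * y 0 - y 2) ^ 2 +
    10 * (3 * y 2 - 2 * y 3) ^ 2 + 30 * (2 * y 1 - y 3) ^ 2 + 30 * (2 * y 7 - y 6) ^ 2 +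
    10 * (3 * y 6 - 2 * y 5) ^ 2 + 5 * (4 * y 5 - 3 * y 4) ^ 2 + 3 * (5 * y 4 - 4 * y 3) ^ 2 +
    2 * y 3 ^ 2 := by
  simp only [qE8]; ring

theorem qE8_nonneg (y : Fin 8 → ℤ) : 0 ≤ qE8 y := by
  have h := qE8_sos y
  have : 0 ≤ 120 * qE8 y := by rw [h]; positivity
  linarith

theorem eq_zero_of_qE8 (y : Fin 8 → ℤ) (h0 : qE8 y = 0) : y = 0 := by
  have h := qE8_sos y
  rw [h0, mul_zero] at h
  have z : ∀ a : ℤ, a ^ 2 ≤ 0 → a = 0 := fun a ha => by nlinarith [pow_eq_zero_iff (two_ne_zero) |>.1 (le_antisymm ha (sq_nonneg a))]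
  have h3 : y 3 = 0 := z _ (by nlinarith [sq_nonneg (2 * y 0 - y 2), sq_nonneg (3 * y 2 - 2 * y 3), sq_nonneg (2 * y 1 - y 3), sq_nonneg (2 * y 7 - y 6), sq_nonneg (3 * y 6 - 2 * y 5), sq_nonneg (4 * y 5 - 3 * y 4), sq_nonneg (5 * y 4 - 4 * y 3)])
  have s1 := sq_nonneg (2 * y 0 - y 2)
  have s2 := sq_nonneg (3 * y 2 - 2 * y 3)
  have s3 := sq_nonneg (2 * y 1 - y 3)
  have s4 := sq_nonneg (2 * y 7 - y 6)
  have s5 := sq_nonneg (3 * y 6 - 2 * y 5)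
  have s6 := sq_nonneg (4 * y 5 - 3 * y 4)
  have s7 := sq_nonneg (5 * y 4 - 4 * y 3)
  have s8 := sq_nonneg (y 3)
  have e1 := z (2 * y 0 - y 2) (by linarith)
  have e2 := z (3 * y 2 - 2 * y 3) (by linarith)
  have e3 := z (2 * y 1 - y 3) (by linarith)
  have e4 := z (2 * y 7 - y 6) (by linarith)
  have e5 := z (3 * y 6 - 2 * y 5) (by linarith)
  have e6 := z (4 * y 5 - 3 * y 4) (by linarith)
  have e7 := z (5 * y 4 - 4 * y 3) (by linarith)
  funext i
  fin_cases i <;> simp only [Pi.zero_apply] <;> simp <;> lia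

theorem NBilin_self (x : I12 → ℤ) : NBilin x x = 2 * (x (.inl (.inl 0)) * x (.inl (.inl 1))) +
    4 * (x (.inl (.inr 0)) * x (.inl (.inr 1)) - qE8 fun i => x (.inr i)) := by
  rw [NBilin_formula, E8_self]; ring

/-- The dual lattice of `N` is contained in `½ N`. -/
theorem exists_half_inverse : ∃ J : Matrix I12 I12 ℤ, NGram * J = (2 : ℤ) • (1 : Matrix I12 I12 ℤ) := by
  have hE : CartanMatrix.E₈ * CartanMatrix.E₈⁻¹ = 1 :=
    Matrix.mul_nonsing_inv _ (by rw [CartanMatrix.E₈_det]; exact isUnit_one)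
  have hU : UGram * UGram = 1 := by decide
  refine ⟨Matrix.fromBlocks (Matrix.fromBlocks ((2 : ℤ) • UGram) 0 0 UGram) 0 0
    (-CartanMatrix.E₈⁻¹), ?_⟩
  rw [NGram, Matrix.fromBlocks_multiply, Matrix.fromBlocks_multiply, ← Matrix.fromBlocks_one,
    ← Matrix.fromBlocks_one, Matrix.fromBlocks_smul, Matrix.fromBlocks_smul]
  simp [-zsmul_eq_mul, hE, hU]

theorem NGram_det : NGram.det = 1024 := by
  have hU : UGram.det = -1 := by decide
  rw [NGram, Matrix.det_fromBlocks_zero₂₁, Matrix.det_fromBlocks_zero₂₁, Matrix.det_smul,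
    Matrix.det_smul, CartanMatrix.E₈_det, hU]
  simp

theorem eq_zero_of_NBilin (x : I12 → ℤ) (h : ∀ y, NBilin x y = 0) : x = 0 := by
  obtain ⟨J, hJ⟩ := exists_half_inverse
  funext i
  have h1 := h (J *ᵥ Pi.single i 1)
  rw [NBilin_eq, Matrix.mulVec_mulVec, hJ] at h1
  rw [Matrix.smul_mulVec, Matrix.one_mulVec, dotProduct_smul, dotProduct_single_one] at h1
  simpa [-zsmul_eq_mul] using h1

theorem even_NBilin {x : I12 → ℤ} (h0 : Even (x (.inl (.inl 0)))) (y : I12 → ℤ)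
    (h1 : Even (x (.inl (.inl 1))) ∨ Even (y (.inl (.inl 0)))) : Even (NBilin x y) := by
  rw [NBilin_formula]
  refine ((h0.mul_right _).add ?_).add (even_two_mul _)
  rcases h1 with h1 | h1
  · exact h1.mul_right _
  · exact h1.mul_left _

theorem four_dvd_NBilin {x : I12 → ℤ} (h0 : Even (x (.inl (.inl 0)))) : 4 ∣ NBilin x x := by
  obtain ⟨k, hk⟩ := h0
  rw [NBilin_self, hk]
  exact ⟨k * x (.inl (.inl 1)) + (x (.inl (.inr 0)) * x (.inl (.inr 1)) - qE8 fun i => x (.inr i)),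
    by ring⟩

theorem NBilin_isom {g : Matrix I12 I12 ℤ} (hg : gᵀ * NGram * g = NGram) (x y : I12 → ℤ) :
    NBilin (g *ᵥ x) (g *ᵥ y) = NBilin x y := by
  rw [NBilin_eq, NBilin_eq]
  conv_rhs => rw [← hg]
  rw [← Matrix.vecMul_transpose, ← Matrix.dotProduct_mulVec,
    Matrix.mulVec_mulVec, Matrix.mulVec_mulVec]

/-- `Φ₁₅(X)` is invertible for every `X ∈ SL₂(𝔽₂)`. -/
theorem sl2_phi15 : ∀ a b c d v w : ZMod 2, a * d + c * b = 1 →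
    (!![a, b; c, d] ^ 8 - !![a, b; c, d] ^ 7 + !![a, b; c, d] ^ 5 - !![a, b; c, d] ^ 4 +
      !![a, b; c, d] ^ 3 - !![a, b; c, d] + 1) *ᵥ ![v, w] = 0 → v = 0 ∧ w = 0 := by
  decide +kernel

/-! ### Reduction modulo two, and Gram matrices of sublattices -/

/-- Every vector killed by `Φ₁₅(g)` has even coordinates along `U`, that is, pairs evenly with `N`:
modulo `2` the isometry `g` acts on the
nondegenerate quotient `N / {x | ⟨x, N⟩ ⊆ 2ℤ} ≅ 𝔽₂²` through `SL₂(𝔽₂)`, where `Φ₁₅` is invertible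
because there are no elements of order `5`. -/
theorem even_of_ker {g : Matrix I12 I12 ℤ} (hunit : IsUnit g.det) (hg : gᵀ * NGram * g = NGram)
    {x : I12 → ℤ} (hx : aeval g (cyclotomic 15 ℤ) *ᵥ x = 0) :
    Even (x (.inl (.inl 0))) ∧ Even (x (.inl (.inl 1))) := by
  let π : (I12 → ℤ) →+ (Fin 2 → ZMod 2) := AddMonoidHom.mk'
    (fun x => ![(x (.inl (.inl 0)) : ZMod 2), (x (.inl (.inl 1)) : ZMod 2)])
    (by intro x y; ext i; fin_cases i <;> simp)
  have hπ : ∀ x, π x = ![(x (.inl (.inl 0)) : ZMod 2), (x (.inl (.inl 1)) : ZMod 2)] := fun _ => rfl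
  let X : Matrix (Fin 2) (Fin 2) (ZMod 2) := !![
    (g (.inl (.inl 0)) (.inl (.inl 0)) : ZMod 2), (g (.inl (.inl 0)) (.inl (.inl 1)) : ZMod 2);
    (g (.inl (.inl 1)) (.inl (.inl 0)) : ZMod 2), (g (.inl (.inl 1)) (.inl (.inl 1)) : ZMod 2)]
  have hinv : gᵀ * NGram = NGram * g⁻¹ := by
    rw [← hg, Matrix.mul_assoc _ g, Matrix.mul_nonsing_inv _ hunit, Matrix.mul_one, hg]
  have hev : ∀ (k : I12) (l : I12), (∀ j, Even (NGram k j)) → Even ((gᵀ * NGram) k l) := by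
    intro k l hk
    rw [hinv, Matrix.mul_apply]
    exact Finset.even_sum _ fun j _ => (hk j).mul_right _
  have hc1 : ∀ k, (gᵀ * NGram) k (.inl (.inl 0)) = g (.inl (.inl 1)) k := by
    intro k
    simp [Matrix.mul_apply, Fintype.sum_sum_type, Fin.sum_univ_two, NGram, UGram]
  have hc0 : ∀ k, (gᵀ * NGram) k (.inl (.inl 1)) = g (.inl (.inl 0)) k := by
    intro k
    simp [Matrix.mul_apply, Fintype.sum_sum_type, Fin.sum_univ_two, NGram, UGram]
  have hrow : ∀ (i : Fin 2) (k : I12), (∀ j, Even (NGram k j)) → (g (.inl (.inl i)) k : ZMod 2) = 0 := by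
    intro i k hk
    rw [ZMod.intCast_eq_zero_iff_even]
    fin_cases i
    · exact hc0 k ▸ hev k _ hk
    · exact hc1 k ▸ hev k _ hk
  have hN1 : ∀ (i : Fin 2) j, Even (NGram (.inl (.inr i)) j) := by
    intro i j
    rcases j with (j | j) | j <;> simp [NGram, -zsmul_eq_mul]
  have hN2 : ∀ (i : Fin 8) j, Even (NGram (.inr i) j) := by
    intro i j
    rcases j with (j | j) | j <;> simp [NGram, -zsmul_eq_mul]
  have hX : ∀ x, π (g *ᵥ x) = X *ᵥ π x := by
    intro x
    have : ∀ i : Fin 2, (((g *ᵥ x) (.inl (.inl i)) : ℤ) : ZMod 2) =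
        (g (.inl (.inl i)) (.inl (.inl 0)) : ZMod 2) * (x (.inl (.inl 0)) : ZMod 2) +
        (g (.inl (.inl i)) (.inl (.inl 1)) : ZMod 2) * (x (.inl (.inl 1)) : ZMod 2) := by
      intro i
      simp [Matrix.mulVec, dotProduct, Fintype.sum_sum_type, Fin.sum_univ_two, hrow _ _ (hN1 _),
        hrow _ _ (hN2 _)]
    rw [hπ, hπ, this 0, this 1]
    ext i
    fin_cases i <;> simp [X, Matrix.mulVec, dotProduct, Fin.sum_univ_two]
  have hdet : (g (.inl (.inl 0)) (.inl (.inl 0)) : ZMod 2) * (g (.inl (.inl 1)) (.inl (.inl 1)) : ZMod 2) +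
      (g (.inl (.inl 1)) (.inl (.inl 0)) : ZMod 2) * (g (.inl (.inl 0)) (.inl (.inl 1)) : ZMod 2) = 1 := by
    have h1 := NBilin_isom hg (Pi.single (.inl (.inl 0)) 1) (Pi.single (.inl (.inl 1)) 1)
    rw [NBilin_formula, NBilin_formula] at h1
    have h2 := congrArg (Int.cast : ℤ → ZMod 2) h1
    have h3 : (2 : ZMod 2) = 0 := rfl
    push_cast at h2
    rw [h3, zero_mul, zero_mul, add_zero, add_zero] at h2
    simpa using h2
  have hpow : ∀ (k : ℕ) x, π (g ^ k *ᵥ x) = X ^ k *ᵥ π x := by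
    intro k
    induction k with
    | zero => simp
    | succ k ih =>
      intro x
      rw [pow_succ, pow_succ, ← Matrix.mulVec_mulVec, ih, hX, Matrix.mulVec_mulVec]
  have h1 := congrArg π hx
  rw [cyclotomic_fifteen_eq] at h1
  simp only [map_add, map_sub, map_pow, aeval_X, map_one, Matrix.add_mulVec, Matrix.sub_mulVec,
    hpow, hX, map_zero, Matrix.one_mulVec] at h1
  have h2 := sl2_phi15 _ _ _ _ (x (.inl (.inl 0)) : ZMod 2) (x (.inl (.inl 1)) : ZMod 2) hdet (by
    simp only [Matrix.add_mulVec, Matrix.sub_mulVec, Matrix.one_mulVec]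
    exact h1)
  rwa [ZMod.intCast_eq_zero_iff_even, ZMod.intCast_eq_zero_iff_even] at h2

/-- The Gram matrix of a finite family of vectors of a sublattice of `N`. -/
noncomputable def gramMat {ι : Type} {S : Submodule ℤ (I12 → ℤ)} (c : ι → S) : Matrix ι ι ℤ :=
  Matrix.of fun i j => NBilin (c i).1 (c j).1

theorem gramMat_comb {ι κ : Type} [Fintype ι] {S : Submodule ℤ (I12 → ℤ)} (c : ι → S)
    (P : Matrix ι κ ℤ) (i j : κ) : (Pᵀ * gramMat c * P) i j =
      NBilin (∑ a, P a i • c a : S).1 (∑ a, P a j • c a : S).1 := by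
  rw [congr_apply]
  simp only [Submodule.coe_sum, Submodule.coe_smul, map_sum, LinearMap.sum_apply, map_smul,
    LinearMap.smul_apply, smul_eq_mul, gramMat, Matrix.of_apply]
  rw [Finset.sum_comm]
  refine Finset.sum_congr rfl fun a _ => ?_
  rw [Finset.mul_sum]
  exact Finset.sum_congr rfl fun d _ => by ring

/-- Vectors (the columns of `P`) whose Gram matrix `G` has, up to sign, the same nonzero determinant
as that of a basis form a basis. -/
theorem exists_basis_of_gram {n : ℕ} {ι : Type} [Fintype ι] [DecidableEq ι] (e : ι ≃ Fin n)
    {S : Submodule ℤ (I12 → ℤ)} (c : Basis (Fin n) ℤ S)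
    (P : Matrix (Fin n) ι ℤ) (G : Matrix ι ι ℤ)
    (hP : Pᵀ * gramMat c * P = G)
    (hdet : |G.det| = |(gramMat c).det|) (h0 : G.det ≠ 0) :
    IsometricTo S G := by
  have hd : IsUnit (P.submatrix id e.symm).det := by
    have h1 : (P.submatrix id e.symm)ᵀ * gramMat c *
        P.submatrix id e.symm = G.submatrix e.symm e.symm := by
      rw [← hP]; rfl
    have h2 := congrArg (fun M => |Matrix.det M|) h1
    simp only [Matrix.det_mul, Matrix.det_transpose, Matrix.det_submatrix_equiv_self, abs_mul] at h2
    rw [hdet] at h2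
    have h3 : 0 < |(gramMat c).det| := by
      rw [← hdet]; exact abs_pos.2 h0
    rw [Int.isUnit_iff_abs_eq]
    have h4 : |(P.submatrix id e.symm).det| ^ 2 = 1 := by
      apply mul_right_cancel₀ h3.ne'
      linarith
    exact (pow_eq_one_iff_of_nonneg (abs_nonneg _) two_ne_zero).1 h4
  let c' : Fin n → S := fun j => ∑ i, P i (e.symm j) • c i
  have hc' : c.toMatrix c' = P.submatrix id e.symm := by
    ext i j
    simp [c', Basis.toMatrix_apply, Finsupp.single_apply]
  have hb := (Basis.is_basis_iff_det c (v := c')).2 (by rw [Basis.det_apply, hc']; exact hd)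
  let b := (Basis.mk hb.1 hb.2.ge).reindex e.symm
  have hbv : ∀ j, b j = ∑ i, P i j • c i := by
    intro j
    simp [b, c']
  refine ⟨b, fun i j => ?_⟩
  rw [hbv, hbv, ← hP, gramMat_comb]

/-! ### Roots of `E₈` from a `Φ₁₅`-orbit -/

/-- Inner products `⟨u, ζᵏu⟩` for a root `u` of a rank-`8` lattice on which `ζ` acts with minimal
polynomial `Φ₁₅`; they are determined by the first three. -/
def rootSeq (a b c : ℤ) : ℕ → ℤ
  | 0 => 2
  | 1 => a
  | 2 => b
  | 3 => c
  | 4 => c - a + 1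
  | 5 => -1
  | 6 => -1 - c
  | _ => -c - b

/-- The Toeplitz Gram matrix of `u, ζu, …, ζ⁷u`. -/
def rootGram (a b c : ℤ) : Matrix (Fin 8) (Fin 8) ℤ :=
  Matrix.of fun i j => rootSeq a b c (max i.val j.val - min i.val j.val)

/-- The sublattice spanned by the `Φ₁₅`-orbit of a root is all of `E₈`: positivity on a few short
vectors leaves eight possible Gram matrices, and in each of them simple roots of `E₈` are exhibited
as the rows of `Q`. -/
theorem exists_E8_frame (a b c : ℤ) (ha : |a| ≤ 2) (hb : |b| ≤ 2) (hc : |c| ≤ 2)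
    (hpos : ∀ x : Fin 8 → ℤ, 0 ≤ x ⬝ᵥ rootGram a b c *ᵥ x) :
    ∃ Q : Matrix (Fin 8) (Fin 8) ℤ, Q * rootGram a b c * Qᵀ = CartanMatrix.E₈ := by
  have h1 := hpos ![1, 1, 0, -1, -1, 0, 1, 1]
  have h2 := hpos ![0, 1, 1, 1, 1, 1, 1, 1]
  have h3 := hpos ![0, 0, 1, 0, -2, 2, 0, -1]
  have h4 := hpos ![0, 0, 0, 0, 1, -1, 1, -1]
  simp [dotProduct, Matrix.mulVec, Fin.sum_univ_eight, rootGram, rootSeq] at h1 h2 h3 h4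
  rw [abs_le] at ha hb hc
  obtain ⟨ha1, ha2⟩ := ha
  obtain ⟨hb1, hb2⟩ := hb
  obtain ⟨hc1, hc2⟩ := hc
  have hcases : (a = -1 ∧ b = 1 ∧ c = -1) ∨
      (a = 0 ∧ b = -1 ∧ c = 0) ∨
      (a = 0 ∧ b = 0 ∧ c = -1) ∨
      (a = 0 ∧ b = 0 ∧ c = 0) ∨
      (a = 0 ∧ b = 1 ∧ c = -1) ∨
      (a = 1 ∧ b = 0 ∧ c = -1) ∨
      (a = 1 ∧ b = 0 ∧ c = 0) ∨
      (a = 1 ∧ b = 1 ∧ c = 0) := by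
    clear hpos
    interval_cases a <;> interval_cases b <;> interval_cases c <;> revert h1 h2 h3 h4 <;> decide
  clear h1 h2 h3 h4 hpos
  rcases hcases with ⟨rfl, rfl, rfl⟩ | ⟨rfl, rfl, rfl⟩ | ⟨rfl, rfl, rfl⟩ | ⟨rfl, rfl, rfl⟩ | ⟨rfl, rfl, rfl⟩ | ⟨rfl, rfl, rfl⟩ | ⟨rfl, rfl, rfl⟩ | ⟨rfl, rfl, rfl⟩
  · exact ⟨!![0, 0, 0, 0, 0, 0, 0, 1;
      1, 0, 0, 0, 0, 0, 0, 0;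
      0, 0, 0, 0, 0, 0, 1, 0;
      0, 1, 0, 0, 0, 0, 0, 0;
      -1, -1, 1, 0, 0, 0, -1, 0;
      0, 0, -1, 0, 1, 0, 0, 0;
      0, 0, 0, 0, -1, -1, 0, 0;
      0, 0, 0, -1, 0, 1, 0, 0], by decide +kernel⟩
  · exact ⟨!![0, 0, 0, 0, 1, 0, 0, 0;
      0, 1, 0, 0, 0, 0, 0, 0;
      0, 0, 1, 0, 0, 0, 0, 0;
      0, 0, 0, 0, 0, 0, 0, 1;
      0, 0, -1, 0, 0, 0, 1, -1;
      -1, 0, 0, 0, 0, -1, -1, 0;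
      2, -1, 0, 0, -1, 1, 0, -1;
      0, 0, 0, 1, 0, 1, 0, 0], by decide +kernel⟩
  · exact ⟨!![0, 0, 1, 0, 0, 0, 0, 0;
      1, 0, 0, 0, 0, 0, 0, 0;
      1, 0, 0, 1, 0, 1, 0, 0;
      -1, 0, 0, -1, 0, 0, 0, 0;
      -1, 0, 0, 0, 0, -1, 0, 1;
      0, 0, 0, 0, 1, 0, 0, 0;
      0, 1, 0, 0, 0, 0, 0, 0;
      1, -2, -1, 0, -2, 0, -1, -2], by decide +kernel⟩
  · exact ⟨!![0, 0, 0, 0, 0, -1, 0, 0;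
      0, 0, 1, 0, 0, 0, 0, 0;
      0, 1, 0, 0, 0, 0, 0, 0;
      0, 0, 0, 0, 0, 0, 0, 1;
      0, 0, 0, -1, 0, 0, 0, 0;
      0, 0, -1, 1, 0, 0, 1, -1;
      -1, -1, 1, 0, 0, 0, -2, 0;
      0, 0, 0, 0, 1, 0, 0, 0], by decide +kernel⟩
  · exact ⟨!![0, 0, 0, 1, 0, 0, 0, 0;
      0, 0, 1, 0, 0, 0, 0, 0;
      0, 0, 0, 0, 0, 0, 1, 0;
      0, 0, 0, 0, -1, 0, 0, 0;
      0, 0, 0, -1, 1, 1, -1, 0;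
      -1, 0, 0, 0, 0, -1, 0, 0;
      1, 1, -1, 0, 1, 0, 0, 0;
      0, -1, 0, 1, 0, -1, 0, 1], by decide +kernel⟩
  · exact ⟨!![1, 0, 0, 0, 0, 0, 0, 0;
      0, 0, 1, 0, 0, 0, 0, 0;
      0, 0, 0, 0, 1, 0, 0, 0;
      0, 0, 0, 0, -1, 1, 0, 0;
      0, -1, 0, 0, 0, -1, 0, 0;
      0, 1, -1, 1, 0, 0, 0, 0;
      0, 0, 0, -1, 0, 0, 0, -1;
      -1, 1, 0, 0, 1, -1, 1, 1], by decide +kernel⟩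
  · exact ⟨!![0, 0, 0, 0, 0, 0, 1, 0;
      0, 0, 1, 0, 0, 0, 0, 0;
      1, 0, 0, 0, 0, 0, 0, 0;
      0, -1, 0, 0, 0, 1, -1, 0;
      0, 0, 0, 0, -1, 0, 0, 0;
      -1, 1, 0, 0, 1, -1, 0, 1;
      0, 1, -1, 0, 0, 0, 1, -1;
      0, 0, -1, 1, 0, -1, 1, -1], by decide +kernel⟩
  · exact ⟨!![0, 0, 1, 0, 0, 0, 0, 0;
      0, 0, 0, 0, 0, 1, 0, 0;
      0, -1, 0, 0, 0, 0, 0, 0;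
      0, 0, 0, 0, 0, 0, -1, 0;
      0, 1, 0, -1, 0, 0, 1, 0;
      0, 0, 0, 1, 0, -1, 0, 1;
      -1, 0, 0, 0, 0, 0, 0, -1;
      1, 0, -1, 0, 1, 0, 0, 0], by decide +kernel⟩

/-- If `N₁₅(-½)` is integral and positive semidefinite, and contains a root `v`, then some linear
combinations of `v, gv, …, g⁷v` are simple roots of an `E₈` in `N₁₅(-½)`. -/
theorem exists_E8_vectors {g : Matrix I12 I12 ℤ} (hg : gᵀ * NGram * g = NGram)
    (heven : ∀ x y, aeval g (cyclotomic 15 ℤ) *ᵥ x = 0 → Even (NBilin x y))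
    (hneg : ∀ x, aeval g (cyclotomic 15 ℤ) *ᵥ x = 0 → NBilin x x ≤ 0)
    {v : I12 → ℤ} (hv : aeval g (cyclotomic 15 ℤ) *ᵥ v = 0) (hv4 : NBilin v v = -4) :
    ∃ w : Fin 8 → I12 → ℤ, (∀ i, aeval g (cyclotomic 15 ℤ) *ᵥ w i = 0) ∧
      ∀ i j, NBilin (w i) (w j) = ((-2 : ℤ) • CartanMatrix.E₈) i j := by
  let u : ℕ → I12 → ℤ := fun k => g ^ k *ᵥ v
  have hu0 : u 0 = v := by simp [u]
  have hus : ∀ k, u (k + 1) = g *ᵥ u k := fun k => by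
    simp [u, pow_succ', Matrix.mulVec_mulVec]
  have hcomm : ∀ k, aeval g (cyclotomic 15 ℤ) * g ^ k = g ^ k * aeval g (cyclotomic 15 ℤ) := by
    intro k
    have : g ^ k = aeval g (X ^ k : ℤ[X]) := by simp
    rw [this, ← map_mul, ← map_mul, mul_comm]
  have hu : ∀ k, aeval g (cyclotomic 15 ℤ) *ᵥ u k = 0 := fun k => by
    simp only [u]
    rw [Matrix.mulVec_mulVec, hcomm, ← Matrix.mulVec_mulVec, hv, Matrix.mulVec_zero]
  choose t ht using fun k => (heven v (u k) hv)
  have hT : ∀ i k, NBilin (u i) (u (i + k)) = NBilin v (u k) := by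
    intro i k
    induction i with
    | zero => rw [hu0, Nat.zero_add]
    | succ i ih => rw [show i + 1 + k = (i + k) + 1 by ring, hus, hus, NBilin_isom hg, ih]
  have hB : ∀ i j, NBilin (u i) (u j) = 2 * t (max i j - min i j) := by
    intro i j
    rcases le_total i j with h | h
    · obtain ⟨k, rfl⟩ := Nat.exists_eq_add_of_le h
      rw [hT, ht, max_eq_right h, min_eq_left h, Nat.add_sub_cancel_left]; ring
    · obtain ⟨k, rfl⟩ := Nat.exists_eq_add_of_le h
      rw [NBilin_comm, hT, ht, max_eq_left h, min_eq_right h, Nat.add_sub_cancel_left]; ring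
  have hrel : u 8 - u 7 + u 5 - u 4 + u 3 - u 1 + u 0 = 0 := by
    rw [cyclotomic_fifteen_eq] at hv
    simpa [Matrix.add_mulVec, Matrix.sub_mulVec, u] using hv
  have hR : ∀ j, t (max j 8 - min j 8) - t (max j 7 - min j 7) + t (max j 5 - min j 5) -
      t (max j 4 - min j 4) + t (max j 3 - min j 3) - t (max j 1 - min j 1) +
      t (max j 0 - min j 0) = 0 := by
    intro j
    have := congrArg (NBilin (u j)) hrel
    simp only [map_add, map_sub, map_zero, hB] at this
    linarith
  -- pairing the relation with `u 4, u 3, u 2, u 1` expresses all `t k` through `t 1, t 2, t 3`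
  have r4 := hR 4
  have r3 := hR 3
  have r2 := hR 2
  have r1 := hR 1
  norm_num at r4 r3 r2 r1
  have t0 : t 0 = -2 := by
    have := ht 0
    rw [hu0, hv4] at this
    linarith
  have hseq : ∀ i j : Fin 8, NBilin (u i) (u j) = (-2) * rootGram (-t 1) (-t 2) (-t 3) i j := by
    intro i j
    have : ∀ k : ℕ, k < 8 → t k = -rootSeq (-t 1) (-t 2) (-t 3) k := by
      intro k hk
      interval_cases k <;> simp only [rootSeq] <;> linarith
    rw [hB, this _ (by lia)]
    simp only [rootGram, Matrix.of_apply]; ring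
  -- linear combinations of the `u k`
  let w : (Fin 8 → ℤ) → I12 → ℤ := fun x => ∑ k, x k • u k
  have hw : ∀ x, aeval g (cyclotomic 15 ℤ) *ᵥ w x = 0 := by
    intro x
    simp only [w, Matrix.mulVec_sum, Matrix.mulVec_smul, hu, smul_zero, Finset.sum_const_zero]
  have hwB : ∀ x y, NBilin (w x) (w y) = (-2) * (x ⬝ᵥ rootGram (-t 1) (-t 2) (-t 3) *ᵥ y) := by
    intro x y
    simp only [w, map_sum, LinearMap.sum_apply, map_smul, LinearMap.smul_apply, hseq, smul_eq_mul,
      dotProduct, Matrix.mulVec, Finset.mul_sum]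
    rw [Finset.sum_comm]
    exact Finset.sum_congr rfl fun a _ => Finset.sum_congr rfl fun d _ => by ring
  have hpos : ∀ x, 0 ≤ x ⬝ᵥ rootGram (-t 1) (-t 2) (-t 3) *ᵥ x := by
    intro x
    have := hneg _ (hw x)
    rw [hwB] at this
    linarith
  -- Cauchy-Schwarz, in the form `⟨v ± u k, v ± u k⟩ ≤ 0`
  have habs : ∀ k, |-t k| ≤ 2 := by
    intro k
    have e1 := hneg (v + u k) (by rw [Matrix.mulVec_add, hv, hu, add_zero])
    have e2 := hneg (v - u k) (by rw [Matrix.mulVec_sub, hv, hu, sub_zero])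
    have e3 : NBilin (u k) (u k) = -4 := by
      rw [hB, max_self, min_self, Nat.sub_self, t0]; rfl
    simp only [map_add, map_sub, LinearMap.add_apply, LinearMap.sub_apply, hv4, e3,
      NBilin_comm (u k) v, ht k] at e1 e2
    rw [abs_le]; constructor <;> linarith
  obtain ⟨Q, hQ⟩ := exists_E8_frame _ _ _ (habs 1) (habs 2) (habs 3) hpos
  refine ⟨fun i => w (Q i), fun i => hw _, fun i j => ?_⟩
  rw [hwB, Matrix.smul_apply, ← hQ, Matrix.mul_apply_eq_vecMul, smul_eq_mul]
  congr 1
  rw [Matrix.dotProduct_mulVec]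
  simp [Matrix.vecMul, dotProduct, Matrix.mul_apply]

/-! ### Orthogonal decompositions of `N` -/

/-- Bases of the two summands of an orthogonal decomposition of `N` together form a basis of `N`. -/
theorem gramMat_det_mul {m n : ℕ} {S D : Submodule ℤ (I12 → ℤ)} (h : IsCompl S D)
    (hort : ∀ x ∈ S, ∀ y ∈ D, NBilin x y = 0) (bS : Basis (Fin m) ℤ S) (bD : Basis (Fin n) ℤ D) :
    m + n = 12 ∧ |(gramMat bS).det| * |(gramMat bD).det| = 1024 := by
  let B := (bS.prod bD).map (S.prodEquivOfIsCompl D h)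
  have hBl : ∀ i, B (.inl i) = (bS i).1 := fun i => by simp [B]
  have hBr : ∀ i, B (.inr i) = (bD i).1 := fun i => by simp [B]
  let e : Fin m ⊕ Fin n ≃ I12 := B.indexEquiv (Pi.basisFun ℤ I12)
  refine ⟨by simpa using Fintype.card_congr e, ?_⟩
  let A : Matrix I12 I12 ℤ := (Pi.basisFun ℤ I12).toMatrix (B.reindex e)
  have hA : IsUnit A.det := by
    have := (Pi.basisFun ℤ I12).isUnit_det (B.reindex e)
    rwa [Basis.det_apply] at this
  have hG : (Aᵀ * NGram * A).submatrix e e = Matrix.fromBlocks (gramMat bS) 0 0 (gramMat bD) := by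
    have hAB : ∀ i j, (Aᵀ * NGram * A) (e i) (e j) = NBilin (B i) (B j) := by
      intro i j
      rw [congr_apply, NBilin_eq]
      simp only [A, Basis.toMatrix_apply, Basis.reindex_apply, Equiv.symm_apply_apply,
        Pi.basisFun_repr, dotProduct, Matrix.mulVec, Finset.mul_sum, mul_assoc]
    ext i j
    rw [Matrix.submatrix_apply, hAB]
    rcases i with i | i <;> rcases j with j | j
    · simp [hBl, gramMat]
    · simp [hBl, hBr, hort _ (bS i).2 _ (bD j).2]
    · rw [NBilin_comm]
      simp [hBl, hBr, hort _ (bS j).2 _ (bD i).2]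
    · simp [hBr, gramMat]
  have h1 := congrArg Matrix.det hG
  rw [Matrix.det_submatrix_equiv_self, Matrix.det_fromBlocks_zero₂₁] at h1
  rw [← abs_mul, ← h1, abs_det_congr _ _ hA, NGram_det]
  rfl

/-- An orthogonal direct summand of `N` all of whose vectors pair evenly with `N` is twice a
unimodular lattice, because `2 N* ⊆ N`. -/
theorem half_unimodular {m : ℕ} {S D : Submodule ℤ (I12 → ℤ)} (h : IsCompl S D)
    (hort : ∀ x ∈ S, ∀ y ∈ D, NBilin x y = 0) (heven : ∀ x ∈ S, ∀ y, Even (NBilin x y))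
    (bS : Basis (Fin m) ℤ S) :
    ∃ M : Matrix (Fin m) (Fin m) ℤ, gramMat bS = (2 : ℤ) • M ∧ IsUnit M.det := by
  choose M0 hM0 using fun i j => heven _ (bS i).2 (bS j).1
  let M : Matrix (Fin m) (Fin m) ℤ := Matrix.of M0
  have hM : gramMat bS = (2 : ℤ) • M := by
    ext i j
    simp only [gramMat, Matrix.of_apply, Matrix.smul_apply, smul_eq_mul, M, hM0]
    ring
  refine ⟨M, hM, ?_⟩
  obtain ⟨J, hJ⟩ := exists_half_inverse
  -- `z i ∈ N` represents twice the `i`-th coordinate form of `S`, extended by zero on `D`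
  let φ : Fin m → (I12 → ℤ) →ₗ[ℤ] ℤ := fun i => bS.coord i ∘ₗ Submodule.projectionOnto S D h
  let z : Fin m → I12 → ℤ := fun i => J *ᵥ fun k => φ i (Pi.single k 1)
  have hz : ∀ i x, NBilin x (z i) = 2 * φ i x := by
    intro i x
    simp only [z]
    rw [NBilin_eq, Matrix.mulVec_mulVec, hJ, Matrix.smul_mulVec, Matrix.one_mulVec, dotProduct_smul,
      smul_eq_mul]
    congr 1
    rw [pi_eq_sum_univ' x, map_sum]
    simp only [map_smul, smul_eq_mul, dotProduct]
    rw [← pi_eq_sum_univ' x]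
  let K : Matrix (Fin m) (Fin m) ℤ :=
    Matrix.of fun k i => bS.repr (Submodule.projectionOnto S D h (z i)) k
  have hMK : M * K = 1 := by
    ext j i
    have h1 := hz i (bS j).1
    have h2 : φ i (bS j).1 = (1 : Matrix (Fin m) (Fin m) ℤ) j i := by
      simp [φ, Finsupp.single_apply, Matrix.one_apply]
    have h3 : NBilin (bS j).1 (z i) =
        NBilin (bS j).1 (Submodule.projectionOnto S D h (z i)).1 := by
      have h4 := hort _ (bS j).2 _ (Submodule.sub_projection_mem h (z i))
      rw [map_sub, sub_eq_zero] at h4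
      rw [h4, Submodule.coe_projectionOnto_apply]
    rw [h3, h2, ← bS.sum_repr (Submodule.projectionOnto S D h (z i))] at h1
    simp only [Submodule.coe_sum, Submodule.coe_smul, map_sum, map_smul, smul_eq_mul, hM0] at h1
    rw [Matrix.mul_apply]
    have h5 : 2 * ∑ k, M j k * K k i = 2 * (1 : Matrix (Fin m) (Fin m) ℤ) j i := by
      rw [← h1, Finset.mul_sum]
      refine Finset.sum_congr rfl fun k _ => ?_
      simp only [M, K, Matrix.of_apply]; ring
    linarith
  exact IsUnit.of_mul_eq_one _ (by rw [← Matrix.det_mul, hMK, Matrix.det_one])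

/-- A primitive fifteenth root of unity is an eigenvalue of `g`, so `Φ₁₅(g)` is singular. -/
theorem exists_ker_ne_zero {g : Matrix I12 I12 ℤ} (hdvd : cyclotomic 15 ℤ ∣ g.charpoly) :
    ∃ x ≠ 0, aeval g (cyclotomic 15 ℤ) *ᵥ x = 0 := by
  rw [Matrix.exists_mulVec_eq_zero_iff]
  let f := Int.castRingHom ℂ
  have hz := (Complex.isPrimitiveRoot_exp 15 (by norm_num)).isRoot_cyclotomic (by norm_num)
  set ζ := Complex.exp (2 * Real.pi * Complex.I / (15 : ℕ))
  have h1 : ζ ∈ spectrum ℂ (g.map f) := by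
    rw [Matrix.mem_spectrum_iff_isRoot_charpoly, Matrix.charpoly_map]
    refine hz.dvd ?_
    rw [← map_cyclotomic_int]
    exact Polynomial.map_dvd _ hdvd
  have h2 := spectrum.subset_polynomial_aeval (g.map f) (cyclotomic 15 ℂ) ⟨ζ, h1, rfl⟩
  simp only [show eval ζ (cyclotomic 15 ℂ) = 0 from hz] at h2
  rw [spectrum.zero_mem_iff, Matrix.isUnit_iff_isUnit_det] at h2
  have h3 : aeval (g.map f) (cyclotomic 15 ℂ) = f.mapMatrix (aeval g (cyclotomic 15 ℤ)) := by
    have h4 : cyclotomic 15 ℂ = X ^ 8 - X ^ 7 + X ^ 5 - X ^ 4 + X ^ 3 - X + 1 := by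
      rw [← map_cyclotomic_int, cyclotomic_fifteen_eq]; simp
    have h5 : g.map f = f.mapMatrix g := rfl
    rw [h4, cyclotomic_fifteen_eq, h5]
    simp only [map_add, map_sub, map_pow, map_one, aeval_X]
  rw [h3, ← RingHom.map_det] at h2
  by_contra h6
  exact h2 (IsUnit.mk0 _ (by simpa [f] using h6))

/-- `N` has signature `(2, 10)`: a vector orthogonal to a positive definite plane is negative. -/
theorem eq_zero_of_nonneg {x p q : I12 → ℤ} (hxp : NBilin x p = 0) (hxq : NBilin x q = 0)
    (hpq : NBilin p q = 0) (hpp : NBilin p p = 2) (hqq : NBilin q q = 4) (hxx : 0 ≤ NBilin x x) :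
    x = 0 := by
  -- a combination of `x, p, q` lying in the negative definite sublattice `x₀ + x₁ = x₂ + x₃ = 0`;
  -- the zero row of `A` makes its kernel nonzero
  let A : Matrix (Fin 3) (Fin 3) ℤ := !![
    x (.inl (.inl 0)) + x (.inl (.inl 1)), p (.inl (.inl 0)) + p (.inl (.inl 1)),
      q (.inl (.inl 0)) + q (.inl (.inl 1));
    x (.inl (.inr 0)) + x (.inl (.inr 1)), p (.inl (.inr 0)) + p (.inl (.inr 1)),
      q (.inl (.inr 0)) + q (.inl (.inr 1));
    0, 0, 0]
  obtain ⟨v, hv0, hv⟩ := Matrix.exists_mulVec_eq_zero_iff.2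
    (Matrix.det_eq_zero_of_row_eq_zero (A := A) 2 (by intro j; fin_cases j <;> rfl))
  have h0 := congrFun hv 0
  have h1 := congrFun hv 1
  simp [A, Matrix.mulVec, dotProduct, Fin.sum_univ_three] at h0 h1
  obtain ⟨y, hy⟩ : ∃ y, y = v 0 • x + v 1 • p + v 2 • q := ⟨_, rfl⟩
  have hyy : NBilin y y = v 0 ^ 2 * NBilin x x + 2 * v 1 ^ 2 + 4 * v 2 ^ 2 := by
    rw [hy]
    simp only [map_add, map_smul, LinearMap.add_apply, LinearMap.smul_apply, smul_eq_mul,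
      NBilin_comm p x, NBilin_comm q x, NBilin_comm q p, hxp, hxq, hpq, hpp, hqq]
    ring
  have hy1 : y (.inl (.inl 1)) = -y (.inl (.inl 0)) := by
    rw [hy]; simp only [Pi.add_apply, Pi.smul_apply, smul_eq_mul]; linarith
  have hy3 : y (.inl (.inr 1)) = -y (.inl (.inr 0)) := by
    rw [hy]; simp only [Pi.add_apply, Pi.smul_apply, smul_eq_mul]; linarith
  have hyf := NBilin_self y
  rw [hy1, hy3] at hyf
  have hq := qE8_nonneg fun i => y (.inr i)
  have hs : 0 ≤ v 0 ^ 2 * NBilin x x := by positivity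
  have s1 := sq_nonneg (v 1)
  have s2 := sq_nonneg (v 2)
  have s3 := sq_nonneg (y (.inl (.inl 0)))
  have s4 := sq_nonneg (y (.inl (.inr 0)))
  have hv1 : v 1 = 0 := pow_eq_zero_iff two_ne_zero |>.1 (by linarith)
  have hv2 : v 2 = 0 := pow_eq_zero_iff two_ne_zero |>.1 (by linarith)
  have hy0 : y (.inl (.inl 0)) = 0 := pow_eq_zero_iff two_ne_zero |>.1 (by linarith)
  have hy2 : y (.inl (.inr 0)) = 0 := pow_eq_zero_iff two_ne_zero |>.1 (by linarith)
  have hyE := eq_zero_of_qE8 (fun i => y (.inr i)) (by linarith)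
  have hyz : y = 0 := by
    funext i
    rcases i with (i | i) | i
    · fin_cases i <;> simp [hy0, hy1]
    · fin_cases i <;> simp [hy2, hy3]
    · exact congrFun hyE i
  rw [hyz, hv1, hv2] at hy
  simp only [zero_smul, add_zero] at hy
  refine (smul_eq_zero.1 hy.symm).resolve_left fun h => hv0 ?_
  funext i
  fin_cases i
  · exact h
  · exact hv1
  · exact hv2

/-! ### The orthogonal complement -/

theorem det_unit_triangular {n : ℕ} (a : Fin (n + 1) → ℤ) :
    (Matrix.of fun i j : Fin (n + 1) =>
      if i = j then 1 else if i = 0 then -a j else 0 : Matrix _ _ ℤ).det = 1 := by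
  rw [Matrix.det_of_isUpperTriangular]
  · simp
  · intro i j hij
    have h1 : j < i := hij
    simp [h1.ne', (Fin.pos_of_ne_zero (Fin.ne_zero_of_lt h1)).ne']

/-- A rank-four summand `D` of `N` of determinant `± 4`, with a complement whose vectors have even
first coordinate, is `U ⊕ U(2)`. The index-two sublattice to which `exists_UU2_frame` applies is
the set of vectors of `D` with even first coordinate. -/
theorem isometricTo_UU2 {S D : Submodule ℤ (I12 → ℤ)} (h : IsCompl S D)
    (hS : ∀ x ∈ S, Even (x (.inl (.inl 0)))) (bD : Basis (Fin 4) ℤ D)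
    (hdet : |(gramMat bD).det| = 4) : IsometricTo D UU2Gram := by
  let ξ : (I12 → ℤ) →ₗ[ℤ] ℤ := LinearMap.proj (.inl (.inl 0))
  -- some basis vector of `D` has odd first coordinate
  obtain ⟨i, hi⟩ : ∃ i, ¬ Even (ξ (bD i).1) := by
    by_contra! hall
    have hD : ∀ y ∈ D, Even (ξ y) := by
      intro y hy
      have h1 := bD.sum_repr ⟨y, hy⟩
      have h2 := congrArg Subtype.val h1
      simp only [Submodule.coe_sum, Submodule.coe_smul] at h2
      rw [← h2, map_sum]
      refine Finset.even_sum _ fun k _ => ?_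
      rw [map_smul, smul_eq_mul]
      exact (hall k).mul_left _
    have hmem : (Pi.single (.inl (.inl 0)) 1 : I12 → ℤ) ∈ S ⊔ D := by
      rw [h.sup_eq_top]; trivial
    obtain ⟨s, hs, d, hd, hsd⟩ := Submodule.mem_sup.1 hmem
    have h3 := congrArg ξ hsd
    rw [map_add] at h3
    have h4 : Even (ξ (Pi.single (.inl (.inl 0)) 1)) := h3 ▸ (hS s hs).add (hD d hd)
    simp [ξ] at h4
  obtain ⟨c, hc⟩ : ∃ c, c = bD.reindex (Equiv.swap 0 i) := ⟨_, rfl⟩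
  have hc0 : Odd (ξ (c 0).1) := by
    rw [← Int.not_even_iff_odd, hc, Basis.reindex_apply]; simpa using hi
  have hcdet : |(gramMat c).det| = 4 := by
    have : gramMat c = (gramMat bD).submatrix (Equiv.swap 0 i).symm (Equiv.swap 0 i).symm := by
      ext k l; simp [hc, gramMat]
    rw [this, Matrix.det_submatrix_equiv_self, hdet]
  -- subtract multiples of the first vector to make the other first coordinates even
  let P0 : Matrix (Fin 4) (Fin 4) ℤ := Matrix.of fun k l =>
    if k = l then 1 else if k = 0 then -ξ (c l).1 else 0
  have hP0 : P0.det = 1 := det_unit_triangular _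
  let d : Fin 4 → D := fun l => ∑ k, P0 k l • c k
  have hd : ∀ l : Fin 3, Even (ξ (d l.succ).1) := by
    intro l
    have h1 : ξ (d l.succ).1 = ∑ k, P0 k l.succ * ξ (c k).1 := by
      simp only [d, Submodule.coe_sum, Submodule.coe_smul, map_sum, map_smul, smul_eq_mul]
    have h2 : ∑ k, P0 k l.succ * ξ (c k).1 = ξ (c l.succ).1 * (1 - ξ (c 0).1) := by
      rw [Fin.sum_univ_succ]
      simp only [P0, Matrix.of_apply, Fin.succ_inj, Fin.succ_ne_zero, (Fin.succ_ne_zero _).symm,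
        if_true, if_false, ite_mul, one_mul, zero_mul, Finset.sum_ite_eq', Finset.mem_univ]
      ring
    rw [h1, h2]
    exact (odd_one.sub_odd hc0).mul_left _
  have hG : ∀ k l, (P0ᵀ * gramMat c * P0) k l = NBilin (d k).1 (d l).1 := gramMat_comb _ _
  obtain ⟨P, hP⟩ := exists_UU2_frame (P0ᵀ * gramMat c * P0)
    (fun k l => by rw [hG, hG, NBilin_comm])
    (by rw [hG, NBilin_self]; exact (even_two_mul _).add (by
      exact (show Even (4 : ℤ) by decide).mul_right _))
    (fun k l => by rw [hG]; exact even_NBilin (hd k) _ (.inr (hd l)))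
    (fun k => by rw [hG]; exact four_dvd_NBilin (hd k))
    (by rw [Matrix.det_mul, Matrix.det_mul, Matrix.det_transpose, hP0, one_mul, mul_one, hcdet])
  have hU : UU2Gram.det = 4 := by
    rw [UU2Gram, Matrix.det_fromBlocks_zero₂₁, Matrix.det_smul, UGram, Matrix.det_fin_two_of]
    norm_num
  refine exists_basis_of_gram finSumFinEquiv c (P0 * P) UU2Gram ?_ ?_ ?_
  · rw [← hP, Matrix.transpose_mul]; simp only [Matrix.mul_assoc]
  · rw [hU, hcdet]; rfl
  · rw [hU]; norm_num

/-! ### The kernel of `Φ₁₅(g)` -/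

/-- A rank-eight `N₁₅` which is twice a unimodular lattice, with `⟨x, x⟩ ∈ 4ℤ` and negative definite,
is `E₈(-2)`: by Hermite's bound it contains a vector `v` with `⟨v, v⟩ = -4`. -/
theorem isometricTo_E8 {g : Matrix I12 I12 ℤ} (hg : gᵀ * NGram * g = NGram)
    (heven : ∀ x y, aeval g (cyclotomic 15 ℤ) *ᵥ x = 0 → Even (NBilin x y))
    (hfour : ∀ x, aeval g (cyclotomic 15 ℤ) *ᵥ x = 0 → 4 ∣ NBilin x x)
    (hneg : ∀ x, aeval g (cyclotomic 15 ℤ) *ᵥ x = 0 → 0 ≤ NBilin x x → x = 0)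
    (bS : Basis (Fin 8) ℤ (LinearMap.ker (aeval g (cyclotomic 15 ℤ)).mulVecLin))
    {M : Matrix (Fin 8) (Fin 8) ℤ} (hM : gramMat bS = (2 : ℤ) • M) (hMu : IsUnit M.det) :
    IsometricTo (LinearMap.ker (aeval g (cyclotomic 15 ℤ)).mulVecLin)
      ((-2 : ℤ) • CartanMatrix.E₈) := by
  have hker : ∀ x : LinearMap.ker (aeval g (cyclotomic 15 ℤ)).mulVecLin,
      aeval g (cyclotomic 15 ℤ) *ᵥ x.1 = 0 := fun x => x.2
  have hMabs : |M.det| = 1 := Int.isUnit_iff_abs_eq.1 hMu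
  have hMs : Mᵀ = M := by
    ext i j
    have h1 := congrFun (congrFun hM i) j
    have h2 := congrFun (congrFun hM j) i
    simp only [gramMat, Matrix.of_apply, Matrix.smul_apply, smul_eq_mul] at h1 h2
    rw [NBilin_comm] at h2
    rw [Matrix.transpose_apply]; linarith
  obtain ⟨P, hPu, hP⟩ := hermite 7 M hMs
  obtain ⟨q, hq⟩ : ∃ q, q = (Pᵀ * M * P) 0 0 := ⟨_, rfl⟩
  rw [← hq, hMabs, show Nat.choose (7 + 1) 2 = 28 from rfl] at hP
  obtain ⟨v, hv⟩ : ∃ v, v = ∑ a, P a 0 • bS a := ⟨_, rfl⟩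
  have hvq : NBilin v.1 v.1 = 2 * q := by
    rw [hv, ← gramMat_comb, hM, hq, Matrix.mul_smul, Matrix.smul_mul, Matrix.smul_apply,
      smul_eq_mul]
  have hv0 : v.1 ≠ 0 := by
    intro h0
    have h1 : ∀ a, P a 0 = 0 :=
      Fintype.linearIndependent_iff.1 bS.linearIndependent _ (hv ▸ Subtype.ext h0)
    rw [Matrix.det_eq_zero_of_column_eq_zero 0 h1] at hPu
    exact not_isUnit_zero hPu
  have hq0 : q < 0 := by
    by_contra! h0
    exact hv0 (hneg _ (hker v) (by rw [hvq]; linarith))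
  -- `3 ^ 28 * 3 ^ 8 > 4 ^ 28`
  have hq2 : |q| ≤ 2 := by
    by_contra! h0
    have h1 : (3 : ℤ) ^ 8 ≤ |q| ^ 8 := pow_le_pow_left₀ (by norm_num) h0 8
    norm_num at hP h1
    linarith
  have hq4 := hfour _ (hker v)
  rw [hvq] at hq4
  have hqv : q = -2 := by rw [abs_le] at hq2; omega
  obtain ⟨w, hw, hwE⟩ := exists_E8_vectors hg heven
    (fun x hx => by by_contra! h0; have := hneg x hx h0.le; simp [this] at h0)
    (hker v) (by rw [hvq, hqv]; rfl)
  let P' : Matrix (Fin 8) (Fin 8) ℤ := Matrix.of fun i j => bS.repr ⟨w j, hw j⟩ i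
  have hE : ((-2 : ℤ) • CartanMatrix.E₈).det = 256 := by
    rw [Matrix.det_smul, CartanMatrix.E₈_det]; rfl
  refine exists_basis_of_gram (Equiv.refl _) bS P' _ ?_ ?_ ?_
  · ext i j
    rw [gramMat_comb, ← hwE]
    simp only [P', Matrix.of_apply, bS.sum_repr]
  · rw [hE, hM, Matrix.det_smul, abs_mul, hMabs]; rfl
  · rw [hE]; norm_num

/-- `U ⊕ U(2)` contains a positive definite plane. -/
theorem exists_orthogonal_pair {D : Submodule ℤ (I12 → ℤ)} (hD : IsometricTo D UU2Gram) :
    ∃ p ∈ D, ∃ q ∈ D, NBilin p q = 0 ∧ NBilin p p = 2 ∧ NBilin q q = 4 := by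
  obtain ⟨b, hb⟩ := hD
  refine ⟨(b (.inl 0)).1 + (b (.inl 1)).1, D.add_mem (b _).2 (b _).2,
    (b (.inr 0)).1 + (b (.inr 1)).1, D.add_mem (b _).2 (b _).2, ?_, ?_, ?_⟩ <;>
  · simp only [map_add, LinearMap.add_apply, hb, UU2Gram, UGram]
    simp

/-- Let `g` be an isometry of `N = U ⊕ U(2) ⊕ E₈(-2)` such that `Φ₁₅` divides its
characteristic polynomial and `N = N₁₅ + N₁₅^⊥` where `N₁₅ = ker Φ₁₅(g)`.  Then
`N₁₅ ≅ E₈(-2)` and `N₁₅^⊥ ≅ U ⊕ U(2)`. -/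
theorem ker_phi15_isometric_E8_neg_two
    (g : Matrix I12 I12 ℤ)
    (hunit : IsUnit g.det)
    (hisom : gᵀ * NGram * g = NGram)
    (hdvd : cyclotomic 15 ℤ ∣ g.charpoly)
    (hsum : LinearMap.ker (aeval g (cyclotomic 15 ℤ)).mulVecLin ⊔
        LinearMap.BilinForm.orthogonal NBilin
          (LinearMap.ker (aeval g (cyclotomic 15 ℤ)).mulVecLin) = ⊤) :
    IsometricTo (LinearMap.ker (aeval g (cyclotomic 15 ℤ)).mulVecLin)
      ((-2 : ℤ) • CartanMatrix.E₈) ∧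
    IsometricTo (LinearMap.BilinForm.orthogonal NBilin
        (LinearMap.ker (aeval g (cyclotomic 15 ℤ)).mulVecLin)) UU2Gram := by
  obtain ⟨S, hSdef⟩ : ∃ S, S = LinearMap.ker (aeval g (cyclotomic 15 ℤ)).mulVecLin := ⟨_, rfl⟩
  have hmem : ∀ x, x ∈ S ↔ aeval g (cyclotomic 15 ℤ) *ᵥ x = 0 := fun x => by
    rw [hSdef, LinearMap.mem_ker, Matrix.mulVecLin_apply]
  rw [← hSdef] at hsum ⊢
  obtain ⟨D, hDdef⟩ : ∃ D, D = LinearMap.BilinForm.orthogonal NBilin S := ⟨_, rfl⟩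
  rw [← hDdef] at hsum ⊢
  have hort : ∀ x ∈ S, ∀ y ∈ D, NBilin x y = 0 := fun x hx y hy => by
    rw [hDdef, LinearMap.BilinForm.mem_orthogonal_iff] at hy
    exact hy x hx
  have hcompl : IsCompl S D := by
    refine ⟨Submodule.disjoint_def.2 fun x hxS hxD => ?_, codisjoint_iff.2 hsum⟩
    refine eq_zero_of_NBilin x fun y => ?_
    obtain ⟨s, hs, d, hd, rfl⟩ := Submodule.mem_sup.1 (hsum ▸ Submodule.mem_top : y ∈ S ⊔ D)
    rw [map_add, hort x hxS d hd, NBilin_comm, hort s hs x hxD, add_zero]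
  have heven : ∀ x y, aeval g (cyclotomic 15 ℤ) *ᵥ x = 0 → Even (NBilin x y) := fun x y hx =>
    have h := even_of_ker hunit hisom hx
    even_NBilin h.1 y (.inl h.2)
  have hfour : ∀ x, aeval g (cyclotomic 15 ℤ) *ᵥ x = 0 → 4 ∣ NBilin x x := fun x hx =>
    four_dvd_NBilin (even_of_ker hunit hisom hx).1
  obtain ⟨m, hm⟩ : ∃ m, m = finrank ℤ S := ⟨_, rfl⟩
  obtain ⟨n, hn⟩ : ∃ n, n = finrank ℤ D := ⟨_, rfl⟩
  let bS : Basis (Fin m) ℤ S := finBasisOfFinrankEq ℤ S hm.symm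
  let bD : Basis (Fin n) ℤ D := finBasisOfFinrankEq ℤ D hn.symm
  obtain ⟨hmn, hdet⟩ := gramMat_det_mul hcompl hort bS bD
  obtain ⟨M, hM, hMu⟩ :=
    half_unimodular hcompl hort (fun x hx y => heven x y ((hmem x).1 hx)) bS
  have hMabs : |M.det| = 1 := Int.isUnit_iff_abs_eq.1 hMu
  rw [hM, Matrix.det_smul, abs_mul, hMabs, mul_one, Fintype.card_fin, abs_pow] at hdet
  -- the rank `m` is a multiple of `4`, at least `8`, and at most `10` since `2 ^ m ∣ 1024`
  have hm0 : m ≠ 0 := by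
    rintro rfl
    obtain ⟨x, hx0, hx⟩ := exists_ker_ne_zero hdvd
    have h1 := bS.sum_repr ⟨x, (hmem x).2 hx⟩
    rw [Finset.univ_eq_empty, Finset.sum_empty] at h1
    exact hx0 (congrArg Subtype.val h1).symm
  have hm10 : m ≤ 10 := by
    have h1 : |(gramMat bD).det| ≠ 0 := by
      intro h0; rw [h0, mul_zero] at hdet; norm_num at hdet
    have h2 : 1 ≤ |(gramMat bD).det| := Int.one_le_abs (abs_ne_zero.1 h1)
    have h3 : (2 : ℤ) ^ m ≤ 2 ^ 10 := by
      rw [show |(2 : ℤ)| = 2 from rfl] at hdet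
      nlinarith [pow_pos (two_pos : (0 : ℤ) < 2) m]
    exact (pow_le_pow_iff_right₀ (by norm_num)).1 h3
  obtain ⟨H, hH⟩ : ∃ H : Matrix (Fin m) (Fin m) ℤ, aeval H (cyclotomic 15 ℤ) = 0 := by
    clear_value bS
    subst hSdef
    exact exists_restrict_matrix bS
  have hm4 := four_dvd_of_phi15 m H hH
  have hm8 := eight_le_of_phi15 m hm0 H hH
  obtain rfl : m = 8 := by omega
  obtain rfl : n = 4 := by omega
  have hDdet : |(gramMat bD).det| = 4 := by
    rw [show |(2 : ℤ)| = 2 from rfl] at hdet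
    linarith
  have hD : IsometricTo D UU2Gram :=
    isometricTo_UU2 hcompl (fun x hx => (even_of_ker hunit hisom ((hmem x).1 hx)).1) bD hDdet
  refine ⟨?_, hD⟩
  obtain ⟨p, hp, q, hq, hpq, hpp, hqq⟩ := exists_orthogonal_pair hD
  have hneg : ∀ x, aeval g (cyclotomic 15 ℤ) *ᵥ x = 0 → 0 ≤ NBilin x x → x = 0 := fun x hx h0 =>
    eq_zero_of_nonneg (hort x ((hmem x).2 hx) p hp) (hort x ((hmem x).2 hx) q hq) hpq hpp hqq h0
  clear_value bS
  subst hSdef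
  exact isometricTo_E8 hisom heven hfour hneg bS hM hMu
end

section
/- Let N be the ℤ-lattice U ⊕ U(2) ⊕ E₈(−2), and let g be an isometry of N satisfying g⁹ = id and g³ ≠ id, and such that the sublattice ker Φ₉(g) has rank 6. Then the determinant of ker Φ₉(g) (with the restricted form) divides 2⁶ · 3³. -/
/-!
Let `K = ker Φ₉(g)`, a primitive sublattice of `N`. Since `2N^∨ ⊆ N` and every functional on the
primitive sublattice `K` extends to `N`, for each `φ ∈ K^∨` there is `n ∈ N` with
`2φ = ⟨n, ·⟩` on `K`. The vector `(g³ - 1)n` lies in `K`, because `Φ₉(g)(g³ - 1) = g⁹ - 1 = 0`, and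
it represents `2φ ∘ (g⁶ - 1)` because `g³` is an isometry with inverse `g⁶`. Applied to the dual
basis, this gives an integral matrix `X` with `G X = 2 Aᵀ`, where `G` is the Gram matrix of `K` and
`A` the matrix of `w - 1` on `K`, with `w = g⁶`. Hence `det G ∣ 2⁶ det A`. On `K` one has
`w² + w + 1 = 0` and `w³ = 1`, so `(w - 1)² = -3w` and `det w = 1`, which gives
`(det A)² = 3⁶`, that is `det A = ±3³`.
-/

open Module Polynomial Matrix

/-- The rescaled dual of `N` is contained in `N`: `2 N⁻¹` is integral. -/
lemma exists_NGram_mul_eq_two : ∃ M : Matrix I12 I12 ℤ, NGram * M = (2 : ℤ) • 1 := by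
  have hE : IsUnit CartanMatrix.E₈.det := by
    rw [CartanMatrix.E₈_det]; exact isUnit_one
  have hU : UGram * UGram = 1 := by decide
  refine ⟨fromBlocks (fromBlocks ((2 : ℤ) • UGram) 0 0 UGram) 0 0
    (-(CartanMatrix.E₈)⁻¹), ?_⟩
  have h1 : (1 : Matrix I12 I12 ℤ) = fromBlocks (fromBlocks 1 0 0 1) 0 0 1 := by
    rw [fromBlocks_one, fromBlocks_one]
  rw [h1, NGram]
  simp only [fromBlocks_multiply, fromBlocks_smul, hU, Matrix.smul_mul, Matrix.mul_smul,
    Matrix.mul_neg, Matrix.mul_nonsing_inv _ hE, Matrix.zero_mul, Matrix.mul_zero, add_zero,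
    zero_add, smul_zero, neg_smul, Matrix.neg_mul, neg_neg, neg_zero]

/-- On a lattice of rank `6`, an endomorphism `w` with `w² + w + 1 = 0` satisfies
`det (w - 1) = ±3³`. -/
lemma det_sub_one_dvd {A : Matrix (Fin 6) (Fin 6) ℤ} (hA : A * A + A + 1 = 0) :
    (A - 1).det ∣ 3 ^ 3 := by
  have h3 : A ^ 3 = 1 := by
    have : A ^ 3 - 1 = (A - 1) * (A * A + A + 1) := by noncomm_ring
    rwa [hA, mul_zero, sub_eq_zero] at this
  have hd : A.det ^ 3 = 1 := by rw [← det_pow, h3, det_one]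
  have hd1 : A.det = 1 := by
    have : (A.det - 1) * (A.det ^ 2 + A.det + 1) = 0 := by linear_combination hd
    rcases mul_eq_zero.mp this with h | h
    · linarith
    · nlinarith [sq_nonneg (2 * A.det + 1)]
  have hsq : (A - 1) * (A - 1) = (-3 : ℤ) • A := by
    have : (A - 1) * (A - 1) = (A * A + A + 1) + (-3 : ℤ) • A := by noncomm_ring
    rw [this, hA, zero_add]
  have h := congrArg det hsq
  rw [det_mul, det_smul, hd1, Fintype.card_fin] at h
  have h' : ((A - 1).det - 27) * ((A - 1).det + 27) = 0 := by linear_combination h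
  rcases mul_eq_zero.mp h' with h | h
  · exact ⟨1, by linarith⟩
  · exact ⟨-1, by linarith⟩

/-- The kernel of an endomorphism `f` of a free lattice is a direct summand, because the quotient
by it is free. Composing with the projection extends functionals from the kernel to the lattice. -/
lemma exists_projection_ker {R V : Type*} [CommRing R] [IsDomain R] [IsPrincipalIdealRing R]
    [AddCommGroup V] [Module R V] [Module.Free R V] [Module.Finite R V] (f : V →ₗ[R] V) :
    ∃ π : V →ₗ[R] ↥(LinearMap.ker f), ∀ k : ↥(LinearMap.ker f), π k = k := by
  obtain ⟨s, hs⟩ := Module.projective_lifting_property f.rangeRestrict LinearMap.id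
    f.surjective_rangeRestrict
  have hs' : ∀ y, f (s y) = y := fun y => congrArg Subtype.val (LinearMap.congr_fun hs y)
  let p : V →ₗ[R] V := LinearMap.id - s ∘ₗ f.rangeRestrict
  have hmem : ∀ x, p x ∈ LinearMap.ker f := fun x => by
    simp [p, hs']
  refine ⟨p.codRestrict _ hmem, fun k => Subtype.ext ?_⟩
  have hk : f.rangeRestrict k.1 = 0 := Subtype.ext k.2
  simp [p, hk]

lemma apply_eq_dotProduct (φ : (I12 → ℤ) →ₗ[ℤ] ℤ) (x : I12 → ℤ) :
    φ x = x ⬝ᵥ fun j => φ (Pi.single j 1) := by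
  rw [LinearMap.pi_apply_eq_sum_univ φ x]
  refine Finset.sum_congr rfl fun j _ => ?_
  rw [smul_eq_mul]
  congr 2
  ext k
  simp [Pi.single_apply, eq_comm]

lemma NBilin_apply (x y : I12 → ℤ) : NBilin x y = x ⬝ᵥ (NGram *ᵥ y) := by
  rw [NBilin, Matrix.toBilin'_apply']

/-- If `g` is an isometry of `N = U ⊕ U(2) ⊕ E₈(-2)` with `g⁹ = 1`, `g³ ≠ 1` and
`ker Φ₉(g)` of rank `6`, then the determinant of `ker Φ₉(g)` divides `2⁶ · 3³`. -/
theorem det_ker_phi9_dvd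
    (g : Matrix I12 I12 ℤ)
    (hunit : IsUnit g.det)
    (hisom : gᵀ * NGram * g = NGram)
    (hord : g ^ 9 = 1)
    (hord3 : g ^ 3 ≠ 1)
    (hrank : finrank ℤ ↥(LinearMap.ker (aeval g (cyclotomic 9 ℤ)).mulVecLin) = 6) :
    ∀ d : ℤ, SubDet (LinearMap.ker (aeval g (cyclotomic 9 ℤ)).mulVecLin) d →
      d ∣ 2 ^ 6 * 3 ^ 3 := by
  have hΦ : aeval g (cyclotomic 9 ℤ) = g ^ 6 + g ^ 3 + 1 := by
    have h9 : cyclotomic 9 ℤ = X ^ 6 + X ^ 3 + 1 := by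
      have := cyclotomic_prime_pow_eq_geom_sum (R := ℤ) (n := 1) Nat.prime_three
      norm_num [Finset.sum_range_succ] at this
      rw [this]; ring
    rw [h9]; simp
  obtain ⟨M, hM⟩ := exists_NGram_mul_eq_two
  set K := LinearMap.ker (aeval g (cyclotomic 9 ℤ)).mulVecLin with hK
  rintro d ⟨k, b, rfl⟩
  obtain ⟨π, hπ⟩ : ∃ π : (I12 → ℤ) →ₗ[ℤ] K, ∀ k : K, π k = k := exists_projection_ker _
  have hmem : ∀ x, x ∈ K ↔ (g ^ 6 + g ^ 3 + 1) *ᵥ x = 0 := fun x => by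
    rw [hK, LinearMap.mem_ker, mulVecLin_apply, hΦ]
  have hk : k = 6 := by
    rw [← hrank, finrank_eq_card_basis b, Fintype.card_fin]
  subst hk
  have hw : ∀ x ∈ K, (g ^ 6).mulVecLin x ∈ K := fun x hx => by
    rw [hmem] at hx ⊢
    rw [mulVecLin_apply, mulVec_mulVec,
      show (g ^ 6 + g ^ 3 + 1) * g ^ 6 = g ^ 6 * (g ^ 6 + g ^ 3 + 1) by noncomm_ring,
      ← mulVec_mulVec, hx, mulVec_zero]
  let w : K →ₗ[ℤ] K := (g ^ 6).mulVecLin.restrict hw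
  have hwval : ∀ x : K, (w x).1 = g ^ 6 *ᵥ x.1 := fun x => rfl
  have hww : w * w + w + 1 = 0 := by
    ext1 x
    apply Subtype.ext
    have hx := (hmem _).1 x.2
    have h12 : g ^ 6 * g ^ 6 = g ^ 3 := by
      rw [← pow_add, show 6 + 6 = 9 + 3 by norm_num, pow_add, hord, one_mul]
    change g ^ 6 *ᵥ (g ^ 6 *ᵥ x.1) + g ^ 6 *ᵥ x.1 + x.1 = 0
    rw [mulVec_mulVec, h12, ← hx, add_mulVec, add_mulVec, one_mulVec]
    abel
  let W := LinearMap.toMatrix b b w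
  have hW : W * W + W + 1 = 0 := by
    have := congrArg (LinearMap.toMatrix b b) hww
    rwa [map_add, map_add, LinearMap.toMatrix_mul, LinearMap.toMatrix_one, map_zero] at this
  -- `v i` is the vector of `N` representing twice the `i`-th dual basis functional,
  -- extended to `N` through `π`.
  let v : Fin 6 → I12 → ℤ := fun i => M *ᵥ fun j => b.coord i (π (Pi.single j 1))
  have hv : ∀ i x, NBilin x (v i) = 2 * b.coord i (π x) := fun i x => by
    rw [NBilin_apply, mulVec_mulVec, hM, smul_mulVec, one_mulVec, dotProduct_smul, smul_eq_mul]
    congr 1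
    exact (apply_eq_dotProduct (b.coord i ∘ₗ π) x).symm
  have hg3 : ∀ x y, NBilin (g ^ 3 *ᵥ x) (g ^ 3 *ᵥ y) = NBilin x y := by
    have h1 : ∀ x y, NBilin (g *ᵥ x) (g *ᵥ y) = NBilin x y := fun x y => by
      rw [NBilin_apply, NBilin_apply, ← vecMul_transpose, ← dotProduct_mulVec, mulVec_mulVec,
        mulVec_mulVec, hisom]
    intro x y
    simp only [pow_succ, pow_zero, one_mul, ← mulVec_mulVec, h1]
  have hmv : ∀ i, (g ^ 3 - 1) *ᵥ v i ∈ K := fun i => by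
    rw [hmem, mulVec_mulVec,
      show (g ^ 6 + g ^ 3 + 1) * (g ^ 3 - 1) = g ^ 9 - 1 by noncomm_ring, hord, sub_self,
      zero_mulVec]
  let y : Fin 6 → K := fun i => ⟨(g ^ 3 - 1) *ᵥ v i, hmv i⟩
  have hy : ∀ (x : K) i, NBilin x.1 (y i).1 = 2 * b.coord i ((w - 1) x) := fun x i => by
    have hx : x.1 = g ^ 3 *ᵥ (g ^ 6 *ᵥ x.1) := by
      rw [mulVec_mulVec, ← pow_add, hord, one_mulVec]
    have h1 : NBilin x.1 (g ^ 3 *ᵥ v i) = NBilin (w x).1 (v i) := by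
      rw [hwval]
      conv_lhs => rw [hx]
      exact hg3 _ _
    change NBilin x.1 ((g ^ 3 - 1) *ᵥ v i) = _
    rw [sub_mulVec, one_mulVec, map_sub, h1, hv, hv, hπ, hπ, LinearMap.sub_apply, map_sub]
    simp only [Module.End.one_apply]
    ring
  have hGX : (Matrix.of fun i j : Fin 6 => NBilin (b i).1 (b j).1) *
      (Matrix.of fun l i => b.repr (y i) l) = (2 : ℤ) • (W - 1)ᵀ := by
    ext j i
    have hsum : (y i).1 = ∑ l, b.repr (y i) l • (b l).1 := by
      have h := congrArg K.subtype (b.sum_repr (y i)).symm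
      rw [map_sum] at h
      simpa only [map_smul, Submodule.subtype_apply] using h
    have hWe : (W - 1) i j = b.coord i ((w - 1) (b j)) := by
      rw [← LinearMap.toMatrix_one b, ← map_sub, LinearMap.toMatrix_apply, Basis.coord_apply]
    rw [Matrix.smul_apply, transpose_apply, hWe, smul_eq_mul, ← hy, hsum, map_sum, mul_apply]
    refine Finset.sum_congr rfl fun l _ => ?_
    rw [map_smul, smul_eq_mul, of_apply, of_apply, mul_comm]
  have hdet := congrArg det hGX
  rw [det_mul, det_smul, det_transpose, Fintype.card_fin] at hdet
  exact (Dvd.intro _ hdet).trans (mul_dvd_mul_left _ (det_sub_one_dvd hW))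
end
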